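/- arXiv:1012.5329 — 3 statements merged into one kernel-verified Lean document; each statement's English description precedes it below -/
import Mathlib

section
/- Let C be a clutter with edge ideal I(C) ⊂ R = K[x_1,...,x_n], let I_c(C) be its ideal of vertex covers, and let α_0'(C) be the cardinality of a largest minimal vertex cover of C. Then reg(R/I_c(C)) ≥ α_0'(C) - 1, and equality holds if R/I(C) is sequentially Cohen-Macaulay. -/
open MvPolynomial

/-- A clutter on the vertex set `Fin n`: a family of edges, none containing another. -/
structure Clutter (n : ℕ) : Type where
  edges : Finset (Finset (Fin n))
  antichain : ∀ e ∈ edges, ∀ f ∈ edges, e ⊆ f → e = f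

/-- The squarefree monomial `∏_{i ∈ e} xᵢ` associated to a set of vertices. -/
noncomputable def edgeMonomial (K : Type) [Field K] {n : ℕ} (e : Finset (Fin n)) :
    MvPolynomial (Fin n) K :=
  ∏ i ∈ e, X i

/-- The edge ideal of a clutter. -/
noncomputable def Clutter.edgeIdeal (K : Type) [Field K] {n : ℕ} (C : Clutter n) :
    Ideal (MvPolynomial (Fin n) K) :=
  Ideal.span (edgeMonomial K '' ↑C.edges)

/-- A vertex cover of a clutter: a set of vertices meeting every edge. -/
def Clutter.IsVertexCover {n : ℕ} (C : Clutter n) (S : Finset (Fin n)) : Prop :=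
  ∀ e ∈ C.edges, ∃ i ∈ e, i ∈ S

/-- The ideal of vertex covers (Alexander dual) of a clutter. -/
noncomputable def Clutter.coverIdeal (K : Type) [Field K] {n : ℕ} (C : Clutter n) :
    Ideal (MvPolynomial (Fin n) K) :=
  Ideal.span (edgeMonomial K '' {S : Finset (Fin n) | C.IsVertexCover S})

/-- A minimal vertex cover of a clutter. -/
def Clutter.IsMinCover {n : ℕ} (C : Clutter n) (S : Finset (Fin n)) : Prop :=
  C.IsVertexCover S ∧ ∀ T : Finset (Fin n), C.IsVertexCover T → T ⊆ S → T = S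

/-- `α₀'(C)`: the maximum cardinality of a minimal vertex cover of `C`. -/
noncomputable def alpha0' {n : ℕ} (C : Clutter n) : ℕ :=
  sSup { k : ℕ | ∃ S : Finset (Fin n), C.IsMinCover S ∧ S.card = k }

/-- A finite graded free resolution of `R/I`, where `R = K[x₁,…,xₙ]`.
`F_i = ⊕_j R(-tw i j)` with `rk i` summands, differentials `δ i : F_{i+1} → F_i`
given by matrices with homogeneous entries of the correct degrees, exact, and
augmented by a degree-preserving surjection `F₀ → R/I`. -/
structure GFR (n : ℕ) (K : Type) [Field K] (I : Ideal (MvPolynomial (Fin n) K)) : Type where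
  len : ℕ
  rk : ℕ → ℕ
  rk_zero : ∀ i, len < i → rk i = 0
  tw : (i : ℕ) → Fin (rk i) → ℕ
  δ : (i : ℕ) → ((Fin (rk (i + 1)) → MvPolynomial (Fin n) K) →ₗ[MvPolynomial (Fin n) K]
        (Fin (rk i) → MvPolynomial (Fin n) K))
  δ_homog : ∀ (i : ℕ) (k : Fin (rk (i + 1))) (j : Fin (rk i)),
      δ i (Pi.single k 1) j = 0 ∨
        (tw i j ≤ tw (i + 1) k ∧ (δ i (Pi.single k 1) j).IsHomogeneous (tw (i + 1) k - tw i j))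
  aug : (Fin (rk 0) → MvPolynomial (Fin n) K) →ₗ[MvPolynomial (Fin n) K] MvPolynomial (Fin n) K
  aug_homog : ∀ j : Fin (rk 0), (aug (Pi.single j 1)).IsHomogeneous (tw 0 j)
  aug_surj : ∀ r : MvPolynomial (Fin n) K, ∃ x, r - aug x ∈ I
  exact_zero : LinearMap.range (δ 0) = Submodule.comap aug I
  exact_succ : ∀ i : ℕ, LinearMap.range (δ (i + 1)) = LinearMap.ker (δ i)

/-- The Castelnuovo–Mumford regularity of `R/I`:
the least `r` such that `R/I` admits a (finite) graded free resolution all of whose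
`i`-th twists are at most `r + i`.  (This value is attained by the minimal graded free
resolution, so it equals `max { j - i : b_{ij}(R/I) ≠ 0 }`.) -/
noncomputable def regR {n : ℕ} {K : Type} [Field K] (I : Ideal (MvPolynomial (Fin n) K)) : ℕ :=
  sInf { r : ℕ | ∃ F : GFR n K I, ∀ (i : ℕ) (j : Fin (F.rk i)), F.tw i j ≤ r + i }

/-- The maximal graded ideal `m = (x₁,…,xₙ)` of `K[x₁,…,xₙ]`. -/
noncomputable def maxIdeal (n : ℕ) (K : Type) [Field K] : Ideal (MvPolynomial (Fin n) K) :=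
  Ideal.span (Set.range (X : Fin n → MvPolynomial (Fin n) K))

/-- The depth of a module `M` over `R = K[x₁,…,xₙ]` with respect to the maximal graded
ideal `m`: the largest length of an `M`-regular sequence contained in `m`. -/
noncomputable def depthR (n : ℕ) (K : Type) [Field K] (M : Type)
    [AddCommGroup M] [Module (MvPolynomial (Fin n) K) M] : ℕ :=
  sSup { k : ℕ | ∃ rs : List (MvPolynomial (Fin n) K), rs.length = k ∧
    (∀ r ∈ rs, r ∈ maxIdeal n K) ∧ RingTheory.Sequence.IsRegular M rs }

/-- The (Krull) dimension of a module `M` over `R = K[x₁,…,xₙ]`: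
the Krull dimension of `R/ann(M)`. -/
noncomputable def dimR (n : ℕ) (K : Type) [Field K] (M : Type)
    [AddCommGroup M] [Module (MvPolynomial (Fin n) K) M] : WithBot (WithTop ℕ) :=
  ringKrullDim (MvPolynomial (Fin n) K ⧸ Module.annihilator (MvPolynomial (Fin n) K) M)

/-- A module over `R = K[x₁,…,xₙ]` is Cohen–Macaulay if it is zero or
its depth equals its Krull dimension. -/
def IsCMmod (n : ℕ) (K : Type) [Field K] (M : Type)
    [AddCommGroup M] [Module (MvPolynomial (Fin n) K) M] : Prop :=
  Subsingleton M ∨ (((depthR n K M : ℕ) : WithTop ℕ) : WithBot (WithTop ℕ)) = dimR n K M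

/-- The subquotient `B/A` of a module, for submodules `A ≤ B`. -/
abbrev subQuot {R M : Type} [CommRing R] [AddCommGroup M] [Module R M]
    (A B : Submodule R M) : Type :=
  ↥B ⧸ Submodule.comap B.subtype A

/-- A submodule `W` of `R/I` is graded (homogeneous) if it is stable under taking
homogeneous components of representatives. -/
def IsGradedSub {n : ℕ} {K : Type} [Field K] (I : Ideal (MvPolynomial (Fin n) K))
    (W : Submodule (MvPolynomial (Fin n) K) (MvPolynomial (Fin n) K ⧸ I)) : Prop :=
  ∀ p : MvPolynomial (Fin n) K, Ideal.Quotient.mk I p ∈ W →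
    ∀ d : ℕ, Ideal.Quotient.mk I (homogeneousComponent d p) ∈ W

/-- `R/I` is sequentially Cohen–Macaulay: there is a finite filtration
`0 = M₀ ⊆ M₁ ⊆ ⋯ ⊆ M_r = R/I` by graded submodules whose successive quotients are
Cohen–Macaulay with strictly increasing Krull dimensions. -/
def IsSeqCM {n : ℕ} (K : Type) [Field K] (I : Ideal (MvPolynomial (Fin n) K)) : Prop :=
  ∃ (r : ℕ) (Mf : Fin (r + 1) → Submodule (MvPolynomial (Fin n) K)
      (MvPolynomial (Fin n) K ⧸ I)),
    Mf 0 = ⊥ ∧ Mf (Fin.last r) = ⊤ ∧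
    (∀ i : Fin r, Mf i.castSucc ≤ Mf i.succ) ∧
    (∀ i : Fin (r + 1), IsGradedSub I (Mf i)) ∧
    (∀ i : Fin r, IsCMmod n K (subQuot (Mf i.castSucc) (Mf i.succ))) ∧
    (∀ i j : Fin r, i < j →
      dimR n K (subQuot (Mf i.castSucc) (Mf i.succ)) <
        dimR n K (subQuot (Mf j.castSucc) (Mf j.succ)))

section Koszul

/-- Koszul sign. -/
def ksg {n : ℕ} (i : Fin n) (T : Finset (Fin n)) : ℤ := (-1) ^ (T.filter (· < i)).card

lemma ksg_mul_self {n : ℕ} (i : Fin n) (T : Finset (Fin n)) : ksg i T * ksg i T = 1 := by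
  unfold ksg
  rw [← pow_add, ← two_mul, pow_mul]; simp

lemma ksg_erase_self {n : ℕ} (i : Fin n) (T : Finset (Fin n)) : ksg i (T.erase i) = ksg i T := by
  unfold ksg
  congr 2
  ext j
  simp only [Finset.mem_filter, Finset.mem_erase]
  constructor
  · tauto
  · rintro ⟨h1, h2⟩; exact ⟨⟨h2.ne, h1⟩, h2⟩

lemma ksg_insert_self {n : ℕ} (i : Fin n) (T : Finset (Fin n)) : ksg i (insert i T) = ksg i T := by
  rw [← ksg_erase_self, Finset.erase_insert_eq_erase, ksg_erase_self]

lemma ksg_erase_gt {n : ℕ} (i j : Fin n) (T : Finset (Fin n)) (h : i < j) :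
    ksg i (T.erase j) = ksg i T := by
  unfold ksg
  congr 2
  ext k
  simp only [Finset.mem_filter, Finset.mem_erase]
  constructor
  · tauto
  · rintro ⟨h1, h2⟩; exact ⟨⟨(h2.trans h).ne, h1⟩, h2⟩

lemma ksg_erase_lt {n : ℕ} (i j : Fin n) (T : Finset (Fin n)) (h : i < j) (hi : i ∈ T) :
    ksg j (T.erase i) = - ksg j T := by
  unfold ksg
  have : (T.filter (· < j)) = insert i ((T.erase i).filter (· < j)) := by
    ext k
    simp only [Finset.mem_filter, Finset.mem_erase, Finset.mem_insert]
    by_cases hk : k = i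
    · subst hk; simp [hi, h]
    · simp [hk]
  rw [this, Finset.card_insert_of_notMem (by simp), pow_succ]
  ring

lemma ksg_anti {n : ℕ} (i j : Fin n) (T : Finset (Fin n)) (h : i ≠ j) (hi : i ∈ T) (hj : j ∈ T) :
    ksg i T * ksg j (T.erase i) = - (ksg j T * ksg i (T.erase j)) := by
  rcases lt_or_gt_of_ne h with h | h
  · rw [ksg_erase_lt i j T h hi, ksg_erase_gt i j T h]; ring
  · rw [ksg_erase_lt j i T h hj, ksg_erase_gt j i T h]; ring

variable {R : Type*} [CommRing R] {n : ℕ}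

/-- The Koszul cochain differential. -/
def kd (a : Fin n → R) (M : Type*) [AddCommGroup M] [Module R M] :
    (Finset (Fin n) → M) →ₗ[R] (Finset (Fin n) → M) where
  toFun f := fun T => ∑ i ∈ T, ksg i T • a i • f (T.erase i)
  map_add' f g := by
    funext T
    simp [smul_add, Finset.sum_add_distrib]
  map_smul' r f := by
    funext T
    simp only [Pi.smul_apply, RingHom.id_apply, Finset.smul_sum]
    refine Finset.sum_congr rfl fun i _ => ?_
    rw [smul_comm r (ksg i T), smul_comm r (a i)]

variable {M : Type*} [AddCommGroup M] [Module R M]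

lemma kd_apply (a : Fin n → R) (f : Finset (Fin n) → M) (T : Finset (Fin n)) :
    kd a M f T = ∑ i ∈ T, ksg i T • a i • f (T.erase i) := rfl

lemma kd_kd (a : Fin n → R) (f : Finset (Fin n) → M) : kd a M (kd a M f) = 0 := by
  funext T
  simp only [kd_apply, Pi.zero_apply, Finset.smul_sum]
  rw [Finset.sum_sigma']
  refine Finset.sum_involution (fun p _ => ⟨p.2, p.1⟩) ?_ ?_ ?_ ?_
  · rintro ⟨i, j⟩ h
    simp only [Finset.mem_sigma, Finset.mem_erase] at h
    obtain ⟨hi, hji, hj⟩ := h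
    have h1 : ∀ i j : Fin n, ksg i T • a i • ksg j (T.erase i) • a j • f ((T.erase i).erase j)
        = (ksg i T * ksg j (T.erase i)) • (a i * a j) • f ((T.erase i).erase j) := by
      intro i j
      rw [smul_comm (a i) (ksg _ _), smul_smul, smul_smul]
    simp only [h1]
    rw [ksg_anti i j T hji.symm hi hj, mul_comm (a j), Finset.erase_right_comm, neg_smul]
    simp
  · rintro ⟨i, j⟩ h _ h2
    simp only [Finset.mem_sigma, Finset.mem_erase] at h
    simp only [Sigma.mk.injEq] at h2
    exact h.2.1 h2.1
  · rintro ⟨i, j⟩ h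
    simp only [Finset.mem_sigma, Finset.mem_erase] at h ⊢
    exact ⟨h.2.2, h.2.1.symm, h.1⟩
  · intros; rfl

/-- Koszul homotopy. -/
def kh (v : Fin n) (f : Finset (Fin n) → M) : Finset (Fin n) → M :=
  fun T => if v ∈ T then 0 else ksg v T • f (insert v T)

lemma kd_kh (a : Fin n → R) (v : Fin n) (f : Finset (Fin n) → M) :
    kd a M (kh v f) + kh v (kd a M f) = a v • f := by
  funext T
  simp only [Pi.add_apply, Pi.smul_apply]
  by_cases hv : v ∈ T
  · rw [kd_apply, Finset.sum_eq_single v]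
    · simp only [kh, hv, Finset.notMem_erase, if_false, if_true, add_zero, Finset.insert_erase]
      rw [ksg_erase_self, smul_comm (a v) (ksg v T), smul_smul, ksg_mul_self, one_smul]
    · intro i hi hiv
      have : v ∈ T.erase i := Finset.mem_erase.2 ⟨hiv.symm, hv⟩
      simp [kh, this]
    · intro h; exact absurd hv h
  · have e : kh v (kd a M f) T = ksg v T • kd a M f (insert v T) := by simp [kh, hv]
    rw [e, kd_apply, kd_apply, Finset.sum_insert hv, ksg_insert_self, Finset.erase_insert hv,
      smul_add, smul_smul, ksg_mul_self, one_smul, add_comm, add_assoc, add_eq_left,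
      Finset.smul_sum, ← Finset.sum_add_distrib]
    refine Finset.sum_eq_zero fun i hi => ?_
    have hiv : i ≠ v := fun h => hv (h ▸ hi)
    have h1 : v ∉ T.erase i := fun h => hv (Finset.mem_of_mem_erase h)
    have h2 : (insert v T).erase i = insert v (T.erase i) := Finset.erase_insert_of_ne hiv.symm
    have h3 := ksg_anti v i (insert v T) hiv.symm (by simp) (by simp [hi])
    rw [ksg_insert_self, h2, ksg_insert_self, Finset.erase_insert hv] at h3
    simp only [kh, h1, if_false, h2]
    rw [smul_comm (a i) (ksg v _), smul_smul, smul_smul]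
    have h4 := ksg_erase_self i (insert v T)
    rw [← add_smul]
    have h5 : ksg v T * ksg i (insert v T) + ksg i T * ksg v (T.erase i) = 0 := by
      have h6 := ksg_anti v i (insert v T) hiv.symm (by simp) (by simp [hi])
      rw [ksg_insert_self, Finset.erase_insert hv, h2, ksg_insert_self] at h6
      rcases lt_or_gt_of_ne hiv with h | h
      · have e1 : ksg v (insert v T |>.erase i) = - ksg v (insert v T) :=
          ksg_erase_lt i v _ h (by simp [hi])
        have e2 : ksg i (insert v T |>.erase v) = ksg i (insert v T) := ksg_erase_gt i v _ h
        rw [h2, ksg_insert_self, ksg_insert_self] at e1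
        rw [Finset.erase_insert hv] at e2
        rw [e1, e2]; ring
      · have e1 : ksg i (insert v T |>.erase v) = - ksg i (insert v T) :=
          ksg_erase_lt v i _ h (by simp)
        have e2 : ksg v (insert v T |>.erase i) = ksg v (insert v T) := ksg_erase_gt v i _ h
        rw [h2, ksg_insert_self, ksg_insert_self] at e2
        rw [Finset.erase_insert hv] at e1
        rw [e1, e2]; ring
    rw [h5, zero_smul]

lemma kd_map {N : Type*} [AddCommGroup N] [Module R N] (a : Fin n → R) (φ : M →ₗ[R] N)
    (f : Finset (Fin n) → M) : kd a N (fun T => φ (f T)) = fun T => φ (kd a M f T) := by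
  funext T
  simp [kd_apply, map_sum]

/-- Vanishing of Koszul cohomology in degrees `< k`. -/
def KEx (a : Fin n → R) (M : Type*) [AddCommGroup M] [Module R M] (k : ℕ) : Prop :=
  ∀ f : Finset (Fin n) → M, (∀ T, k ≤ T.card → f T = 0) → kd a M f = 0 →
    ∃ g : Finset (Fin n) → M, (∀ T, k ≤ T.card + 1 → g T = 0) ∧ kd a M g = f

lemma KEx_zero (a : Fin n → R) : KEx a M 0 := by
  intro f hf _
  refine ⟨0, fun _ _ => rfl, ?_⟩
  rw [map_zero]; funext T; exact (hf T (Nat.zero_le _)).symm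

lemma KEx_mono (a : Fin n → R) {k l : ℕ} (h : l ≤ k) (hk : KEx a M k) : KEx a M l := by
  intro f hf hd
  obtain ⟨g, hg, rfl⟩ := hk f (fun T hT => hf T (h.trans hT)) hd
  refine ⟨fun T => if l ≤ T.card + 1 then 0 else g T, fun T hT => by simp [hT], ?_⟩
  funext T
  by_cases hT : l ≤ T.card
  · rw [hf T hT, kd_apply]
    refine Finset.sum_eq_zero fun i hi => ?_
    rw [if_pos, smul_zero, smul_zero]
    rw [Finset.card_erase_add_one hi]; exact hT
  · rw [kd_apply, kd_apply]
    refine Finset.sum_congr rfl fun i hi => ?_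
    rw [if_neg]
    rw [Finset.card_erase_add_one hi]; exact hT

lemma KEx_of_subsingleton [Subsingleton M] (a : Fin n → R) (k : ℕ) : KEx a M k := by
  intro f _ _
  exact ⟨0, fun _ _ => rfl, Subsingleton.elim _ _⟩

lemma KEx_ext {A C : Type*} [AddCommGroup A] [Module R A] [AddCommGroup C] [Module R C]
    (a : Fin n → R) (k : ℕ) (i : A →ₗ[R] M) (π : M →ₗ[R] C) (hi : Function.Injective i)
    (hπ : Function.Surjective π) (hex : ∀ b, π b = 0 → ∃ x, i x = b)
    (hA : KEx a A k) (hC : KEx a C k) : KEx a M k := by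
  intro f hf hd
  obtain ⟨g, hg, hgf⟩ := hC (fun T => π (f T)) (fun T hT => by rw [hf T hT, map_zero])
    (by rw [kd_map, hd]; funext T; simp)
  have hl : ∀ T, ∃ y, π y = g T ∧ (k ≤ T.card + 1 → y = 0) := by
    intro T
    by_cases hT : k ≤ T.card + 1
    · exact ⟨0, by rw [hg T hT, map_zero], fun _ => rfl⟩
    · obtain ⟨y, hy⟩ := hπ (g T)
      exact ⟨y, hy, fun h => absurd h hT⟩
  choose y hy hy0 using hl
  have hl2 : ∀ T, ∃ x, i x = f T - kd a M y T ∧ (k ≤ T.card → x = 0) := by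
    intro T
    obtain ⟨x, hx⟩ := hex (f T - kd a M y T) (by
      rw [map_sub, sub_eq_zero]
      have := congrFun (kd_map a π y) T
      rw [← this, ← congrFun hgf T]
      simp [hy])
    refine ⟨x, hx, fun hT => ?_⟩
    apply hi
    rw [hx, map_zero, hf T hT, zero_sub, neg_eq_zero, kd_apply]
    refine Finset.sum_eq_zero fun j hj => ?_
    rw [hy0, smul_zero, smul_zero]
    rw [Finset.card_erase_add_one hj]; exact hT
  choose x hx hx0 using hl2
  have hx' : (fun T => i (x T)) = f - kd a M y := by funext T; simp [hx]
  obtain ⟨w, hw, hwx⟩ := hA x hx0 (by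
    have h1 := kd_map a i x
    rw [hx', map_sub, hd, kd_kd] at h1
    funext T
    apply hi
    have := congrFun h1 T
    simp only [sub_zero, Pi.zero_apply] at this
    rw [← this, Pi.zero_apply, map_zero])
  refine ⟨y + fun T => i (w T), ?_, ?_⟩
  · intro T hT
    simp [hy0 T hT, hw T hT]
  · rw [map_add, kd_map, hwx, hx']
    abel

lemma KEx_coboundary_smul (a : Fin n → R) (k : ℕ) (f : Finset (Fin n) → M)
    (hf : ∀ T, k + 1 ≤ T.card → f T = 0) (hd : kd a M f = 0) (r : R)
    (hr : r ∈ Ideal.span (Set.range a)) :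
    ∃ g : Finset (Fin n) → M, (∀ T, k + 1 ≤ T.card + 1 → g T = 0) ∧ kd a M g = r • f := by
  induction hr using Submodule.span_induction with
  | mem x hx =>
    obtain ⟨v, rfl⟩ := hx
    refine ⟨kh v f, ?_, ?_⟩
    · intro T hT
      by_cases hv : v ∈ T
      · simp [kh, hv]
      · simp only [kh, hv, if_false]
        rw [hf, smul_zero]
        rw [Finset.card_insert_of_notMem hv]; exact hT
    · have := kd_kh a v f
      rw [hd] at this
      rw [← this]
      have : kh v (0 : Finset (Fin n) → M) = 0 := by funext T; simp [kh]
      rw [this, add_zero]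
  | zero => exact ⟨0, fun _ _ => rfl, by simp⟩
  | add x y _ _ hx hy =>
    obtain ⟨g1, h1, h1'⟩ := hx
    obtain ⟨g2, h2, h2'⟩ := hy
    exact ⟨g1 + g2, fun T hT => by simp [h1 T hT, h2 T hT], by rw [map_add, h1', h2', add_smul]⟩
  | smul c x _ hx =>
    obtain ⟨g, h, h'⟩ := hx
    exact ⟨c • g, fun T hT => by simp [h T hT], by rw [map_smul, h', smul_assoc]⟩

lemma KEx_regular (a : Fin n → R) (k : ℕ) (r : R)
    (hr : r ∈ (Ideal.span (Set.range a)).radical) (hreg : IsSMulRegular M r)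
    (h : KEx a (QuotSMulTop r M) k) : KEx a M (k + 1) := by
  intro f hf hd
  have key : ∀ N : ℕ, (∃ g : Finset (Fin n) → M, (∀ T, k + 1 ≤ T.card + 1 → g T = 0) ∧
      kd a M g = r ^ N • f) → 
      ∃ g : Finset (Fin n) → M, (∀ T, k + 1 ≤ T.card + 1 → g T = 0) ∧ kd a M g = f := by
    intro N
    induction N with
    | zero => rintro ⟨g, h1, h2⟩; exact ⟨g, h1, by simpa using h2⟩
    | succ N ih =>
      rintro ⟨w, hw, hwf⟩
      apply ih
      set π : M →ₗ[R] QuotSMulTop r M := Submodule.mkQ _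
      have hπ : Function.Surjective π := Submodule.mkQ_surjective _
      have hπ0 : ∀ x, π x = 0 → ∃ y, r • y = x := by
        intro x hx
        rw [Submodule.mkQ_apply, Submodule.Quotient.mk_eq_zero] at hx
        obtain ⟨y, _, hy⟩ := (Submodule.mem_smul_pointwise_iff_exists _ _ _).1 hx
        exact ⟨y, hy⟩
      have hπr : ∀ x, π (r • x) = 0 := by
        intro x
        rw [Submodule.mkQ_apply, Submodule.Quotient.mk_eq_zero]
        exact Submodule.smul_mem_pointwise_smul _ _ _ trivial
      obtain ⟨v, hv, hvw⟩ := h (fun T => π (w T))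
        (fun T hT => by rw [hw T (by omega), map_zero]) (by
          rw [kd_map, hwf]
          funext T
          rw [Pi.smul_apply, pow_succ', mul_smul, hπr]; rfl)
      have hl : ∀ T, ∃ y, π y = v T ∧ (k ≤ T.card + 1 → y = 0) := by
        intro T
        by_cases hT : k ≤ T.card + 1
        · exact ⟨0, by rw [hv T hT, map_zero], fun _ => rfl⟩
        · obtain ⟨y, hy⟩ := hπ (v T)
          exact ⟨y, hy, fun h => absurd h hT⟩
      choose y hy hy0 using hl
      have hl2 : ∀ T, ∃ u, r • u = w T - kd a M y T := by
        intro T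
        apply hπ0
        rw [map_sub, sub_eq_zero]
        have := congrFun (kd_map a π y) T
        rw [← this, ← congrFun hvw T]
        simp [hy]
      choose u hu using hl2
      refine ⟨u, ?_, ?_⟩
      · intro T hT
        apply hreg
        simp only
        rw [hu, hw T hT, smul_zero, zero_sub, neg_eq_zero, kd_apply]
        refine Finset.sum_eq_zero fun j hj => ?_
        rw [hy0, smul_zero, smul_zero]
        rw [Finset.card_erase_add_one hj]; omega
      · have h1 : r • u = w - kd a M y := by funext T; simp [hu]
        have h2 : kd a M (r • u) = r • (r ^ N • f) := by
          rw [h1, map_sub, kd_kd, sub_zero, hwf, pow_succ', mul_smul]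
        rw [map_smul] at h2
        funext T
        apply hreg
        exact congrFun h2 T
  obtain ⟨N, hN⟩ := hr
  exact key N (KEx_coboundary_smul a k f hf hd _ hN)

end Koszul

lemma KEx_of_weaklyRegular {R : Type*} [CommRing R] {n : ℕ} (a : Fin n → R) (rs : List R) :
    ∀ (M : Type*) [AddCommGroup M] [Module R M]
    (_ : ∀ r ∈ rs, r ∈ (Ideal.span (Set.range a)).radical)
    (_ : RingTheory.Sequence.IsWeaklyRegular M rs), KEx a M rs.length := by
  induction rs with
  | nil => intro M _ _ _ _; exact KEx_zero a
  | cons r rs ih =>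
    intro M _ _ h1 h2
    rw [RingTheory.Sequence.isWeaklyRegular_cons_iff] at h2
    exact KEx_regular a _ r (h1 r (by simp)) h2.1
      (ih _ (fun r hr => h1 r (by simp [hr])) h2.2)

section Mono
variable {K : Type} [Field K] {n : ℕ}

/-- The exponent vector of a set. -/
noncomputable def fexp (S : Finset (Fin n)) : Fin n →₀ ℕ := ∑ i ∈ S, Finsupp.single i 1

lemma fexp_apply (S : Finset (Fin n)) (i : Fin n) : fexp S i = if i ∈ S then 1 else 0 := by
  simp [fexp, Finsupp.finsetSum_apply, Finsupp.single_apply]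

lemma edgeMonomial_eq (S : Finset (Fin n)) : edgeMonomial K S = monomial (fexp S) 1 := by
  rw [edgeMonomial, fexp, monomial_sum_one]
  rfl

lemma fexp_le_iff (S : Finset (Fin n)) (e : Fin n →₀ ℕ) : fexp S ≤ e ↔ S ⊆ e.support := by
  rw [Finsupp.le_def]
  constructor
  · intro h i hi
    have := h i
    rw [fexp_apply, if_pos hi] at this
    rw [Finsupp.mem_support_iff]; omega
  · intro h i
    rw [fexp_apply]
    split_ifs with hi
    · have := h hi
      rw [Finsupp.mem_support_iff] at this; omega
    · exact Nat.zero_le _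

lemma mem_span_edge (A : Set (Finset (Fin n))) (f : MvPolynomial (Fin n) K) :
    f ∈ Ideal.span (edgeMonomial K '' A) ↔ ∀ e ∈ f.support, ∃ S ∈ A, S ⊆ e.support := by
  have : edgeMonomial K '' A = (fun s => monomial s (1 : K)) '' (fexp '' A) := by
    rw [Set.image_image]
    exact Set.image_congr fun S _ => edgeMonomial_eq S
  rw [this, mem_ideal_span_monomial_image]
  simp [fexp_le_iff]

lemma mem_edgeIdeal (C : Clutter n) (f : MvPolynomial (Fin n) K) :
    f ∈ C.edgeIdeal K ↔ ∀ e ∈ f.support, ∃ S ∈ C.edges, S ⊆ e.support := by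
  rw [Clutter.edgeIdeal, mem_span_edge]; rfl

lemma cover_mono (C : Clutter n) {S T : Finset (Fin n)} (h : S ⊆ T) (hS : C.IsVertexCover S) :
    C.IsVertexCover T := fun e he => by
  obtain ⟨i, hi, hi'⟩ := hS e he
  exact ⟨i, hi, h hi'⟩

lemma mem_coverIdeal (C : Clutter n) (f : MvPolynomial (Fin n) K) :
    f ∈ C.coverIdeal K ↔ ∀ e ∈ f.support, C.IsVertexCover e.support := by
  rw [Clutter.coverIdeal, mem_span_edge]
  refine forall₂_congr fun e _ => ⟨?_, fun h => ⟨_, h, subset_rfl⟩⟩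
  rintro ⟨S, hS, hSe⟩
  exact cover_mono C hSe hS

lemma exists_minCover (C : Clutter n) (S : Finset (Fin n)) (hS : C.IsVertexCover S) :
    ∃ T ⊆ S, C.IsMinCover T := by
  induction S using Finset.strongInduction with
  | H S ih =>
    by_cases h : C.IsMinCover S
    · exact ⟨S, subset_rfl, h⟩
    · simp only [Clutter.IsMinCover, not_and, not_forall] at h
      obtain ⟨T, hT, hTS, hne⟩ := h hS
      obtain ⟨U, hU, hU'⟩ := ih T (hTS.ssubset_of_ne hne) hT
      exact ⟨U, hU.trans hTS, hU'⟩

lemma alpha_bdd (C : Clutter n) :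
    BddAbove { k : ℕ | ∃ S : Finset (Fin n), C.IsMinCover S ∧ S.card = k } := by
  refine ⟨n, ?_⟩
  rintro k ⟨S, _, rfl⟩
  simpa using S.card_le_univ

lemma le_alpha (C : Clutter n) (S : Finset (Fin n)) (hS : C.IsMinCover S) : S.card ≤ alpha0' C :=
  le_csSup (alpha_bdd C) ⟨S, hS, rfl⟩

lemma alpha_le (C : Clutter n) : alpha0' C ≤ n := by
  apply csSup_le'
  rintro k ⟨S, _, rfl⟩
  simpa using S.card_le_univ

/-- Killing the variables in `S`. -/
noncomputable def killS (K : Type) [Field K] {n : ℕ} (S : Finset (Fin n)) :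
    MvPolynomial (Fin n) K →ₐ[K] MvPolynomial {i : Fin n // i ∉ S} K :=
  killCompl (Subtype.val_injective)

lemma killS_surj (S : Finset (Fin n)) : Function.Surjective (killS K S) := fun p =>
  ⟨rename Subtype.val p, killCompl_rename_app _ p⟩

lemma killS_X_mem (S : Finset (Fin n)) (i : Fin n) (hi : i ∈ S) : killS K S (X i) = 0 := by
  simp only [killS, killCompl, aeval_X]
  rw [dif_neg]
  simpa using hi

lemma killS_X_notMem (S : Finset (Fin n)) (i : Fin n) (hi : i ∉ S) :
    killS K S (X i) = X ⟨i, hi⟩ := by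
  have := killCompl_rename_app (R := K) (Subtype.val_injective (p := fun i => i ∉ S)) (X ⟨i, hi⟩)
  rw [rename_X] at this
  exact this

lemma killS_eq_zero (S : Finset (Fin n)) (f : MvPolynomial (Fin n) K) (hf : killS K S f = 0) :
    ∀ e ∈ f.support, ∃ i ∈ S, e i ≠ 0 := by
  have key : ((Ideal.Quotient.mkₐ K (Ideal.span (X '' (S : Set (Fin n)) : Set (MvPolynomial (Fin n) K)))).comp
      (rename Subtype.val)).comp (killS K S) = Ideal.Quotient.mkₐ K _ := by
    apply algHom_ext
    intro i
    by_cases hi : i ∈ S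
    · simp only [AlgHom.comp_apply, killS_X_mem S i hi, map_zero]
      symm
      rw [Ideal.Quotient.mkₐ_eq_mk, Ideal.Quotient.eq_zero_iff_mem]
      exact Ideal.subset_span ⟨i, hi, rfl⟩
    · simp only [AlgHom.comp_apply, killS_X_notMem S i hi, rename_X]
  have h2 := congrArg (fun φ => φ f) key
  simp only [AlgHom.comp_apply, hf, map_zero] at h2
  have h3 := h2.symm
  rw [Ideal.Quotient.mkₐ_eq_mk, Ideal.Quotient.eq_zero_iff_mem, mem_ideal_span_X_image] at h3
  simpa using h3

lemma killS_edge (C : Clutter n) (S : Finset (Fin n)) (hS : C.IsVertexCover S)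
    (f : MvPolynomial (Fin n) K) (hf : f ∈ C.edgeIdeal K) : killS K S f = 0 := by
  have : C.edgeIdeal K ≤ RingHom.ker (killS K S) := by
    rw [Clutter.edgeIdeal, Ideal.span_le]
    rintro _ ⟨e, he, rfl⟩
    obtain ⟨i, hi, hiS⟩ := hS e he
    simp only [SetLike.mem_coe, RingHom.mem_ker, edgeMonomial, map_prod]
    exact Finset.prod_eq_zero hi (killS_X_mem S i hiS)
  exact this hf

lemma dim_ge (C : Clutter n)
    (W : Submodule (MvPolynomial (Fin n) K) (MvPolynomial (Fin n) K ⧸ C.edgeIdeal K))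
    (hW : W ≠ ⊥) : (((n - alpha0' C : ℕ) : WithTop ℕ) : WithBot (WithTop ℕ)) ≤ dimR n K W := by
  obtain ⟨w, hw, hw0⟩ := Submodule.exists_mem_ne_zero_of_ne_bot hW
  obtain ⟨f, rfl⟩ := Ideal.Quotient.mk_surjective w
  rw [Ne, Ideal.Quotient.eq_zero_iff_mem, mem_edgeIdeal] at hw0
  push Not at hw0
  obtain ⟨e, he, hec⟩ := hw0
  have hcov : C.IsVertexCover (e.supportᶜ) := by
    intro E hE
    have := hec E hE
    rw [Finset.not_subset] at this
    obtain ⟨i, hi, hi'⟩ := this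
    exact ⟨i, hi, Finset.mem_compl.2 hi'⟩
  obtain ⟨S, hS, hSm⟩ := exists_minCover C _ hcov
  have hfS : killS K S f ≠ 0 := by
    intro h
    obtain ⟨i, hi, hi'⟩ := killS_eq_zero S f h e he
    have := hS hi
    rw [Finset.mem_compl, Finsupp.mem_support_iff] at this
    exact this hi'
  have hann : ∀ g ∈ Module.annihilator (MvPolynomial (Fin n) K) W, killS K S g = 0 := by
    intro g hg
    have h1 := Module.mem_annihilator.1 hg ⟨_, hw⟩
    have h2 : Ideal.Quotient.mk (C.edgeIdeal K) (g * f) = 0 := by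
      have := congrArg Subtype.val h1
      rw [Submodule.coe_smul, Submodule.coe_zero] at this
      rw [map_mul, ← this]
      rfl
    rw [Ideal.Quotient.eq_zero_iff_mem] at h2
    have h3 := killS_edge C S hSm.1 _ h2
    rw [map_mul] at h3
    exact (mul_eq_zero.1 h3).resolve_right hfS
  have h1 := ringKrullDim_le_of_surjective
    (Ideal.Quotient.lift (Module.annihilator (MvPolynomial (Fin n) K) W)
      (killS K S).toRingHom hann)
    (Ideal.Quotient.lift_surjective_of_surjective _ hann (killS_surj S))
  refine le_trans ?_ h1
  rw [MvPolynomial.ringKrullDim_of_isNoetherianRing, ringKrullDim_eq_zero_of_field, zero_add]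
  have h2 : Nat.card {i : Fin n // i ∉ S} = n - S.card := by
    rw [Nat.card_eq_fintype_card, Fintype.card_subtype_compl]
    simp
  rw [h2]
  have h3 := le_alpha C S hSm
  have : n - alpha0' C ≤ n - S.card := by omega
  have h4 : ((n - alpha0' C : ℕ) : WithBot ℕ∞) ≤ ((n - S.card : ℕ) : WithBot ℕ∞) :=
    Nat.cast_le.2 this
  exact h4

lemma depth_KEx (M : Type) [AddCommGroup M] [Module (MvPolynomial (Fin n) K) M] (k : ℕ)
    (hk : k ≤ depthR n K M) :
    KEx (fun i : Fin n => (X i ^ 2 : MvPolynomial (Fin n) K)) M k := by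
  rcases Nat.eq_zero_or_pos k with rfl | hpos
  · exact KEx_zero _
  unfold depthR at hk
  set A := { k : ℕ | ∃ rs : List (MvPolynomial (Fin n) K), rs.length = k ∧
    (∀ r ∈ rs, r ∈ maxIdeal n K) ∧ RingTheory.Sequence.IsRegular M rs } with hA
  have hne : A.Nonempty := by
    by_contra h
    rw [Set.not_nonempty_iff_eq_empty] at h
    rw [h] at hk; simp at hk; omega
  have hb : BddAbove A := by
    by_contra h
    rw [Nat.sSup_of_not_bddAbove h] at hk; omega
  obtain ⟨rs, hl, hm, hreg⟩ := Nat.sSup_mem hne hb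
  rw [← hl] at hk
  refine KEx_mono _ hk (KEx_of_weaklyRegular _ rs M (fun r hr => ?_) hreg.toIsWeaklyRegular)
  have h1 : maxIdeal n K ≤
      (Ideal.span (Set.range (fun i : Fin n => (X i ^ 2 : MvPolynomial (Fin n) K)))).radical := by
    rw [maxIdeal, Ideal.span_le]
    rintro _ ⟨i, rfl⟩
    exact ⟨2, Ideal.subset_span ⟨i, rfl⟩⟩
  exact h1 (hm r hr)

lemma seqCM_KEx (C : Clutter n) (h : IsSeqCM K (C.edgeIdeal K)) :
    KEx (fun i : Fin n => (X i ^ 2 : MvPolynomial (Fin n) K))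
      (MvPolynomial (Fin n) K ⧸ C.edgeIdeal K) (n - alpha0' C) := by
  obtain ⟨r, Mf, h0, htop, hmono, -, hCM, hdim⟩ := h
  -- dimension of each nonzero quotient
  have hd : ∀ i : Fin r, ¬ Subsingleton (subQuot (Mf i.castSucc) (Mf i.succ)) →
      (((n - alpha0' C : ℕ) : WithTop ℕ) : WithBot (WithTop ℕ)) ≤
        dimR n K (subQuot (Mf i.castSucc) (Mf i.succ)) := by
    -- the least index with nonzero term
    intro i hi
    have hne : Mf i.succ ≠ ⊥ := by
      intro hb
      apply hi
      rw [Submodule.Quotient.subsingleton_iff, eq_top_iff]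
      rintro ⟨x, hx⟩ _
      rw [hb, Submodule.mem_bot] at hx
      subst hx
      exact Submodule.zero_mem _
    have key : ∀ m : ℕ, ∀ j : Fin r, (j : ℕ) = m → Mf j.succ ≠ ⊥ →
        (((n - alpha0' C : ℕ) : WithTop ℕ) : WithBot (WithTop ℕ)) ≤
        dimR n K (subQuot (Mf j.castSucc) (Mf j.succ)) := by
      intro m
      induction m with
      | zero =>
        intro j hj hjne
        have hc : j.castSucc = 0 := by ext; simpa using hj
        have hb : Mf j.castSucc = ⊥ := by rw [hc, h0]
        have e : subQuot (Mf j.castSucc) (Mf j.succ) ≃ₗ[MvPolynomial (Fin n) K] Mf j.succ := by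
          refine Submodule.quotEquivOfEqBot _ ?_
          rw [hb, eq_bot_iff]
          rintro ⟨x, hx⟩ hx'
          simpa using hx'
        unfold dimR
        rw [e.annihilator_eq]
        exact dim_ge C _ hjne
      | succ m ih =>
        intro j hj hjne
        by_cases hb : Mf j.castSucc = ⊥
        · have e : subQuot (Mf j.castSucc) (Mf j.succ) ≃ₗ[MvPolynomial (Fin n) K] Mf j.succ := by
            refine Submodule.quotEquivOfEqBot _ ?_
            rw [hb, eq_bot_iff]
            rintro ⟨x, hx⟩ hx'
            simpa using hx'
          unfold dimR
          rw [e.annihilator_eq]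
          exact dim_ge C _ hjne
        · have hlt : m < r := by have := j.2; omega
          have hs : (⟨m, hlt⟩ : Fin r).succ = j.castSucc := by ext; simp [hj]
          have h1 := ih ⟨m, hlt⟩ rfl (by rw [hs]; exact hb)
          exact h1.trans (hdim ⟨m, hlt⟩ j (by rw [Fin.lt_def]; simp [hj])).le
    exact key _ i rfl hne
  have hq : ∀ i : Fin r, KEx (fun i : Fin n => (X i ^ 2 : MvPolynomial (Fin n) K))
      (subQuot (Mf i.castSucc) (Mf i.succ)) (n - alpha0' C) := by
    intro i
    by_cases hs : Subsingleton (subQuot (Mf i.castSucc) (Mf i.succ))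
    · exact KEx_of_subsingleton _ _
    · apply depth_KEx
      have h1 := hd i hs
      rw [← (hCM i).resolve_left hs] at h1
      exact_mod_cast h1
  have hall : ∀ m : ℕ, ∀ hm : m < r + 1,
      KEx (fun i : Fin n => (X i ^ 2 : MvPolynomial (Fin n) K)) (Mf ⟨m, hm⟩) (n - alpha0' C) := by
    intro m
    induction m with
    | zero =>
      intro hm
      have : Mf ⟨0, hm⟩ = ⊥ := h0
      rw [this]
      exact KEx_of_subsingleton _ _
    | succ m ih =>
      intro hm
      have hlt : m < r := by omega
      have h1 := hq ⟨m, hlt⟩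
      have h2 := ih (by omega)
      have hle : Mf ⟨m, by omega⟩ ≤ Mf ⟨m + 1, hm⟩ := hmono ⟨m, hlt⟩
      refine KEx_ext _ _ (Submodule.inclusion hle)
        (Submodule.mkQ (Submodule.comap (Mf ⟨m + 1, hm⟩).subtype (Mf ⟨m, by omega⟩)))
        (Submodule.inclusion_injective hle) (Submodule.mkQ_surjective _) ?_ h2 h1
      intro b hb
      rw [Submodule.mkQ_apply, Submodule.Quotient.mk_eq_zero] at hb
      exact ⟨⟨b.1, hb⟩, rfl⟩
  have hfin := hall r (by omega)
  have ht : Mf ⟨r, by omega⟩ = ⊤ := htop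
  rw [ht] at hfin
  exact KEx_ext (C := PUnit.{1}) _ _ (Submodule.subtype ⊤) 0 (Submodule.subtype_injective _)
    (fun _ => ⟨0, rfl⟩) (fun b _ => ⟨⟨b, trivial⟩, rfl⟩) hfin (KEx_of_subsingleton _ _)

end Mono

section Multi
variable {K : Type} [Field K] {n : ℕ}

lemma coeff_zsmul' (e : Fin n →₀ ℕ) (z : ℤ) (p : MvPolynomial (Fin n) K) :
    coeff e (z • p) = z • coeff e p :=
  map_zsmul (coeffAddMonoidHom (R := K) e) z p

/-- Admissible sets in the (shifted) multidegree `b`. -/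
def kok (b : Fin n →₀ ℕ) (T : Finset (Fin n)) : Prop := ∀ i, b i ≠ 0 ∨ i ∈ T

/-- Exponent in the (shifted) multidegree `b`. -/
noncomputable def ksh (b : Fin n →₀ ℕ) (T : Finset (Fin n)) : Fin n →₀ ℕ :=
  b + fexp T - fexp Finset.univ

lemma ksh_apply (b : Fin n →₀ ℕ) (T : Finset (Fin n)) (i : Fin n) :
    ksh b T i = b i + (if i ∈ T then 1 else 0) - 1 := by
  simp [ksh, fexp_apply]

open Classical in
/-- Multidegree component. -/
noncomputable def kPsi (b : Fin n →₀ ℕ) (f : Finset (Fin n) → MvPolynomial (Fin n) K) :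
    Finset (Fin n) → K :=
  fun T => if kok b T then coeff (ksh b T) (f T) else 0

open Classical in
/-- Inclusion of a multidegree component. -/
noncomputable def kPhi (b : Fin n →₀ ℕ) (c : Finset (Fin n) → K) :
    Finset (Fin n) → MvPolynomial (Fin n) K :=
  fun T => if kok b T then monomial (ksh b T) (c T) else 0

lemma kok_of_erase (b : Fin n →₀ ℕ) (T : Finset (Fin n)) (i : Fin n) (h : kok b (T.erase i)) :
    kok b T := fun j => (h j).imp id Finset.mem_of_mem_erase

lemma ksh_erase (b : Fin n →₀ ℕ) (T : Finset (Fin n)) (i : Fin n) (hi : i ∈ T)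
    (h : kok b (T.erase i)) : ksh b T = ksh b (T.erase i) + Finsupp.single i 1 := by
  ext j
  rw [Finsupp.add_apply, ksh_apply, ksh_apply, Finsupp.single_apply]
  by_cases hj : i = j
  · subst hj
    have := (h i).resolve_right (by simp)
    simp [hi]; omega
  · have hj' : j ≠ i := fun h => hj h.symm
    simp [hj, hj']

lemma kPsi_kd (b : Fin n →₀ ℕ) (f : Finset (Fin n) → MvPolynomial (Fin n) K) :
    kd (1 : Fin n → K) K (kPsi b f) =
      kPsi b (kd (X : Fin n → MvPolynomial (Fin n) K) _ f) := by
  funext T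
  by_cases hT : kok b T
  · simp only [kPsi, hT, if_true, kd_apply]
    rw [coeff_sum]
    refine Finset.sum_congr rfl fun i hi => ?_
    rw [coeff_zsmul', smul_eq_mul (X i)]
    congr 1
    simp only [Pi.one_apply, one_smul]
    rw [coeff_X_mul']
    by_cases h : kok b (T.erase i)
    · rw [if_pos h, ksh_erase b T i hi h, if_pos (by simp), add_tsub_cancel_right]
    · rw [if_neg h, if_neg]
      intro h2
      apply h
      intro j
      rcases hT j with h3 | h3
      · exact Or.inl h3
      · by_cases hj : j = i
        · subst hj
          left
          rw [Finsupp.mem_support_iff, ksh_apply, if_pos hi] at h2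
          omega
        · exact Or.inr (Finset.mem_erase.2 ⟨hj, h3⟩)
  · simp only [kPsi, hT, if_false, kd_apply]
    refine Finset.sum_eq_zero fun i hi => ?_
    rw [if_neg (fun h => hT (kok_of_erase b T i h)), smul_zero, smul_zero]

lemma kPhi_kd (b : Fin n →₀ ℕ) (c : Finset (Fin n) → K) (hc : ∀ T, ¬ kok b T → c T = 0) :
    kd (X : Fin n → MvPolynomial (Fin n) K) _ (kPhi b c) = kPhi b (kd (1 : Fin n → K) K c) := by
  funext T
  by_cases hT : kok b T
  · simp only [kPhi, hT, if_true, kd_apply]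
    rw [map_sum]
    refine Finset.sum_congr rfl fun i hi => ?_
    rw [map_zsmul]
    congr 1
    simp only [Pi.one_apply, one_smul]
    by_cases h : kok b (T.erase i)
    · rw [if_pos h, ksh_erase b T i hi h, smul_eq_mul, X, monomial_mul, one_mul, add_comm]
    · rw [if_neg h, hc _ h, smul_zero, map_zero]
  · simp only [kPhi, hT, if_false, kd_apply]
    refine Finset.sum_eq_zero fun i hi => ?_
    rw [if_neg (fun h => hT (kok_of_erase b T i h)), smul_zero, smul_zero]

lemma kPhi_sum (f : Finset (Fin n) → MvPolynomial (Fin n) K) :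
    ∃ B : Finset (Fin n →₀ ℕ), ∑ b ∈ B, kPhi b (kPsi b f) = f := by
  classical
  refine ⟨Finset.univ.biUnion fun T =>
    (f T).support.image (fun e => e + fexp Finset.univ - fexp T), ?_⟩
  funext T
  rw [Finset.sum_apply]
  ext e
  rw [coeff_sum]
  have h1 : ∀ b : Fin n →₀ ℕ, coeff e (kPhi b (kPsi b f) T) =
      if b = e + fexp Finset.univ - fexp T then coeff e (f T) else 0 := by
    intro b
    by_cases hb : b = e + fexp Finset.univ - fexp T
    · have hbi : ∀ i, b i = e i + 1 - (if i ∈ T then 1 else 0) := by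
        intro i; rw [hb]; simp [fexp_apply]
      have hok : kok b T := by
        intro i
        by_cases hi : i ∈ T
        · exact Or.inr hi
        · left; rw [hbi, if_neg hi]; omega
      have hsh : ksh b T = e := by
        ext i
        rw [ksh_apply, hbi]
        split_ifs <;> omega
      rw [if_pos hb]
      simp only [kPhi, kPsi, hok, hsh, if_true, coeff_monomial]
    · rw [if_neg hb]
      by_cases hok : kok b T
      · simp only [kPhi, hok, if_true, coeff_monomial]
        rw [if_neg]
        intro hsh
        apply hb
        ext i
        have h2 := hok i
        have h3 := congrArg (fun x => x i) hsh
        simp only [ksh_apply] at h3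
        simp only [Finsupp.tsub_apply, Finsupp.add_apply, fexp_apply, Finset.mem_univ, if_true]
        split_ifs at h3 ⊢ with hi
        · omega
        · have := h2.resolve_right hi; omega
      · simp [kPhi, hok]
  simp only [h1]
  rw [Finset.sum_ite_eq']
  split_ifs with h
  · rfl
  · by_contra h2
    apply h
    simp only [Finset.mem_biUnion, Finset.mem_univ, true_and, Finset.mem_image]
    exact ⟨T, e, mem_support_iff.2 (Ne.symm h2), rfl⟩

lemma kmulti (A : Set (Fin n →₀ ℕ)) (k : ℕ) (f : Finset (Fin n) → MvPolynomial (Fin n) K)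
    (h : ∀ b, ∃ g : Finset (Fin n) → K,
      (∀ T, g T ≠ 0 → kok b T ∧ ksh b T ∈ A ∧ T.card + 1 < k) ∧
        kd (1 : Fin n → K) K g = kPsi b f) :
    ∃ g : Finset (Fin n) → MvPolynomial (Fin n) K, (∀ T, k ≤ T.card + 1 → g T = 0) ∧
      (∀ T, ∀ e ∈ (g T).support, e ∈ A) ∧
      kd (X : Fin n → MvPolynomial (Fin n) K) _ g = f := by
  classical
  choose g hg hgd using h
  obtain ⟨B, hB⟩ := kPhi_sum f
  refine ⟨∑ b ∈ B, kPhi b (g b), ?_, ?_, ?_⟩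
  · intro T hT
    rw [Finset.sum_apply]
    refine Finset.sum_eq_zero fun b _ => ?_
    have : g b T = 0 := by
      by_contra h
      have := (hg b T h).2.2
      omega
    simp [kPhi, this]
  · intro T e he
    rw [Finset.sum_apply, mem_support_iff, coeff_sum] at he
    obtain ⟨b, _, hb⟩ := Finset.exists_ne_zero_of_sum_ne_zero he
    by_cases hok : kok b T
    · simp only [kPhi, hok, if_true, coeff_monomial] at hb
      split_ifs at hb with h1
      · rw [← h1]; exact (hg b T hb).2.1
      · exact absurd rfl hb
    · simp [kPhi, hok] at hb
  · rw [map_sum]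
    conv_rhs => rw [← hB]
    refine Finset.sum_congr rfl fun b _ => ?_
    rw [kPhi_kd, hgd]
    intro T hT
    by_contra h
    exact hT (hg b T h).1

lemma kh_spec (v : Fin n) (c : Finset (Fin n) → K) (hc : kd (1 : Fin n → K) K c = 0) :
    kd (1 : Fin n → K) K (kh v c) = c := by
  have := kd_kh (1 : Fin n → K) v c
  rw [hc] at this
  have h0 : kh v (0 : Finset (Fin n) → K) = 0 := by funext T; simp [kh]
  rw [h0, add_zero, Pi.one_apply, one_smul] at this
  exact this

lemma kh_ne (v : Fin n) (c : Finset (Fin n) → K) (T : Finset (Fin n)) (h : kh v c T ≠ 0) :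
    v ∉ T ∧ c (insert v T) ≠ 0 := by
  unfold kh at h
  split_ifs at h with hv
  · exact absurd rfl h
  · exact ⟨hv, fun h0 => h (by rw [h0, smul_zero])⟩

lemma kPsi_zero (b : Fin n →₀ ℕ) : kPsi b (0 : Finset (Fin n) → MvPolynomial (Fin n) K) = 0 := by
  funext T; simp [kPsi]

lemma kPsi_ne (b : Fin n →₀ ℕ) (f : Finset (Fin n) → MvPolynomial (Fin n) K)
    (T : Finset (Fin n)) (h : kPsi b f T ≠ 0) : kok b T ∧ coeff (ksh b T) (f T) ≠ 0 := by
  unfold kPsi at h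
  split_ifs at h with hv
  · exact ⟨hv, h⟩
  · exact absurd rfl h

/-- Exactness of the Koszul complex on the polynomial ring. -/
lemma free_exact (k : ℕ) (f : Finset (Fin n) → MvPolynomial (Fin n) K)
    (hf : ∀ T, k ≤ T.card → f T = 0)
    (hd : kd (X : Fin n → MvPolynomial (Fin n) K) _ f = 0)
    (hc : coeff 0 (f Finset.univ) = 0) :
    ∃ g : Finset (Fin n) → MvPolynomial (Fin n) K, (∀ T, k ≤ T.card + 1 → g T = 0) ∧
      kd (X : Fin n → MvPolynomial (Fin n) K) _ g = f := by
  obtain ⟨g, h1, _, h2⟩ := kmulti (Set.univ) k f (by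
    intro b
    have hcyc : kd (1 : Fin n → K) K (kPsi b f) = 0 := by rw [kPsi_kd, hd, kPsi_zero]
    by_cases hb : ∃ v, b v ≠ 0
    · obtain ⟨v, hv⟩ := hb
      refine ⟨kh v (kPsi b f), ?_, kh_spec v _ hcyc⟩
      intro T hT
      obtain ⟨hvT, h1⟩ := kh_ne v _ T hT
      obtain ⟨h2, h3⟩ := kPsi_ne _ _ _ h1
      refine ⟨?_, trivial, ?_⟩
      · intro i
        rcases h2 i with h | h
        · exact Or.inl h
        · rcases Finset.mem_insert.1 h with rfl | h
          · exact Or.inl hv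
          · exact Or.inr h
      · by_contra h4
        apply h3
        rw [hf, coeff_zero]
        rw [Finset.card_insert_of_notMem hvT]; omega
    · push Not at hb
      refine ⟨0, fun T h => absurd rfl h, ?_⟩
      rw [map_zero]
      funext T
      symm
      by_contra h
      obtain ⟨h2, h3⟩ := kPsi_ne _ _ _ h
      have hT : T = Finset.univ := by
        ext i; simpa [hb i] using h2 i
      subst hT
      apply h3
      have : ksh b Finset.univ = 0 := by ext i; simp [ksh_apply, hb]
      rw [this, hc])
  exact ⟨g, h1, h2⟩

end Multi

section Dual
variable {K : Type} [Field K] {n : ℕ}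

/-- Faces of the Stanley-Reisner complex. -/
def kface (C : Clutter n) (T : Finset (Fin n)) : Prop := ∀ E ∈ C.edges, ¬ E ⊆ T

lemma kface_mono (C : Clutter n) {S T : Finset (Fin n)} (h : S ⊆ T) (hT : kface C T) :
    kface C S := fun E hE hES => hT E hE (hES.trans h)

/-- Exponent used in the link extraction. -/
noncomputable def kex (F T : Finset (Fin n)) : Fin n →₀ ℕ := fexp T + fexp T - fexp F

lemma kex_apply (F T : Finset (Fin n)) (i : Fin n) :
    kex F T i = (if i ∈ T then 1 else 0) + (if i ∈ T then 1 else 0) - (if i ∈ F then 1 else 0) := by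
  simp [kex, fexp_apply]

lemma kex_support (F T : Finset (Fin n)) : (kex F T).support = T := by
  ext i
  rw [Finsupp.mem_support_iff, kex_apply]
  split_ifs <;> simp_all

lemma kex_erase (F T : Finset (Fin n)) (i : Fin n) (hi : i ∈ T) (hF : F ⊆ T.erase i) :
    kex F T = kex F (T.erase i) + Finsupp.single i 2 := by
  ext j
  rw [Finsupp.add_apply, kex_apply, kex_apply, Finsupp.single_apply]
  by_cases hj : i = j
  · subst hj
    have : i ∉ F := fun h => by simpa using hF h
    simp [hi, this]
  · have hj' : j ≠ i := fun h => hj h.symm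
    simp [hj, hj']

lemma coeff_edge_face (C : Clutter n) (p : MvPolynomial (Fin n) K) (hp : p ∈ C.edgeIdeal K)
    (e : Fin n →₀ ℕ) (he : kface C e.support) : coeff e p = 0 := by
  by_contra h
  obtain ⟨E, hE, hE'⟩ := (mem_edgeIdeal C p).1 hp e (mem_support_iff.2 h)
  exact he E hE hE'

lemma link_exact (C : Clutter n) (k : ℕ)
    (hK : KEx (fun i : Fin n => (X i ^ 2 : MvPolynomial (Fin n) K))
      (MvPolynomial (Fin n) K ⧸ C.edgeIdeal K) k) (F : Finset (Fin n))
    (c : Finset (Fin n) → K) (hc : ∀ T, c T ≠ 0 → F ⊆ T ∧ T.card < k)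
    (hd : ∀ T, kface C T → kd (1 : Fin n → K) K c T = 0) :
    ∃ g : Finset (Fin n) → K, (∀ T, g T ≠ 0 → F ⊆ T) ∧
      ∀ T, kface C T → F ⊆ T → kd (1 : Fin n → K) K g T = c T := by
  classical
  set a := (fun i : Fin n => (X i ^ 2 : MvPolynomial (Fin n) K)) with ha
  set I := C.edgeIdeal K with hI
  let π : MvPolynomial (Fin n) K →ₗ[MvPolynomial (Fin n) K] (MvPolynomial (Fin n) K ⧸ I) :=
    Submodule.mkQ I
  have hπ0 : ∀ p, π p = 0 ↔ p ∈ I := fun p => Submodule.Quotient.mk_eq_zero _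
  let fl : Finset (Fin n) → MvPolynomial (Fin n) K := fun T => monomial (kex F T) (c T)
  have hfl : ∀ T, kd a _ fl T = monomial (kex F T) (kd (1 : Fin n → K) K c T) := by
    intro T
    rw [kd_apply, kd_apply, map_sum]
    refine Finset.sum_congr rfl fun i hi => ?_
    rw [map_zsmul]
    congr 1
    simp only [Pi.one_apply, one_smul]
    by_cases h : F ⊆ T.erase i
    · simp only [fl, ha, smul_eq_mul]
      rw [kex_erase F T i hi h, X_pow_eq_monomial, monomial_mul, one_mul, add_comm]
    · have : c (T.erase i) = 0 := by
        by_contra h1; exact h (hc _ h1).1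
      simp [fl, this]
  obtain ⟨g, hg, hgf⟩ := hK (fun T => π (fl T)) (by
    intro T hT
    have : c T = 0 := by
      by_contra h1
      have := (hc _ h1).2; omega
    simp [fl, this]) (by
    rw [kd_map]
    funext T
    rw [hfl, Pi.zero_apply, hπ0]
    by_cases hT : kface C T
    · rw [hd T hT, map_zero]; exact Submodule.zero_mem _
    · rw [hI, mem_edgeIdeal]
      intro e he
      have he' := support_monomial_subset he
      rw [Finset.mem_singleton] at he'
      subst he'
      rw [kex_support]
      unfold kface at hT
      push Not at hT
      exact hT)
  have hsurj : ∀ T, ∃ y, π y = g T := fun T => Submodule.mkQ_surjective _ _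
  choose y hy using hsurj
  refine ⟨fun T => if F ⊆ T then coeff (kex F T) (y T) else 0, ?_, ?_⟩
  · intro T hT
    by_contra h
    exact hT (if_neg h)
  · intro T hT hFT
    have h1 : kd a _ y T - fl T ∈ I := by
      rw [← hπ0, map_sub, sub_eq_zero]
      have h2 := congrFun (kd_map a π y) T
      have h3 := congrFun hgf T
      rw [← h2, ← h3]
      simp [hy]
    have h4 := coeff_edge_face C _ h1 (kex F T) (by rw [kex_support]; exact hT)
    rw [coeff_sub, sub_eq_zero] at h4
    have h5 : coeff (kex F T) (fl T) = c T := by simp [fl]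
    rw [← h5, ← h4, kd_apply, kd_apply, coeff_sum]
    refine Finset.sum_congr rfl fun i hi => ?_
    rw [coeff_zsmul']
    congr 1
    simp only [Pi.one_apply, one_smul, ha, smul_eq_mul]
    rw [X_pow_eq_monomial, coeff_monomial_mul']
    by_cases h : F ⊆ T.erase i
    · rw [if_pos h, kex_erase F T i hi h, if_pos (by simp), add_tsub_cancel_right]
    · rw [if_neg h, if_neg, mul_zero]
      intro h6
      have h7 := h6 i
      have hiF : i ∈ F := by
        by_contra hiF
        exact h (fun j hj => Finset.mem_erase.2 ⟨fun hji => hiF (hji ▸ hj), hFT hj⟩)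
      rw [kex_apply] at h7
      simp [hi, hiF] at h7

lemma sum_erase_swap (φ : Finset (Fin n) → Fin n → K) :
    ∑ T : Finset (Fin n), ∑ i ∈ T, φ T i = ∑ T : Finset (Fin n), ∑ i ∈ Tᶜ, φ (insert i T) i := by
  rw [Finset.sum_sigma', Finset.sum_sigma']
  refine Finset.sum_bij' (fun p _ => ⟨p.1.erase p.2, p.2⟩) (fun p _ => ⟨insert p.2 p.1, p.2⟩)
    ?_ ?_ ?_ ?_ ?_
  · rintro ⟨T, i⟩ h; simp
  · rintro ⟨T, i⟩ h; simp
  · rintro ⟨T, i⟩ h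
    simp only [Finset.mem_sigma, Finset.mem_univ, true_and] at h
    simp [Finset.insert_erase h]
  · rintro ⟨T, i⟩ h
    simp only [Finset.mem_sigma, Finset.mem_univ, true_and, Finset.mem_compl] at h
    simp [Finset.erase_insert h]
  · rintro ⟨T, i⟩ h
    simp only [Finset.mem_sigma, Finset.mem_univ, true_and] at h
    simp [Finset.insert_erase h]

lemma link_dual (C : Clutter n) (k : ℕ)
    (hK : KEx (fun i : Fin n => (X i ^ 2 : MvPolynomial (Fin n) K))
      (MvPolynomial (Fin n) K ⧸ C.edgeIdeal K) k) (F : Finset (Fin n))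
    (c : Finset (Fin n) → K) (hc : ∀ T, c T ≠ 0 → F ⊆ T ∧ kface C T ∧ T.card < k)
    (hd : ∀ T, F ⊆ T → ∑ i ∈ Tᶜ, ksg i (insert i T) • c (insert i T) = 0) :
    ∃ g : Finset (Fin n) → K, (∀ T, ¬ kface C T → g T = 0) ∧
      ∀ T, kface C T → F ⊆ T → T.card < k →
        ∑ i ∈ Tᶜ, ksg i (insert i T) • g (insert i T) = c T := by
  classical
  let π : (Finset (Fin n) → K) →ₗ[K] (Finset (Fin n) → K) :=
    { toFun := fun f T => if F ⊆ T ∧ kface C T ∧ T.card < k then f T else 0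
      map_add' := by intro f g; funext T; simp only [Pi.add_apply]; split_ifs <;> simp
      map_smul' := by intro r f; funext T; simp }
  let ρ : (Finset (Fin n) → K) →ₗ[K] (Finset (Fin n) → K) :=
    { toFun := fun f T => if kface C T then f T else 0
      map_add' := by intro f g; funext T; simp only [Pi.add_apply]; split_ifs <;> simp
      map_smul' := by intro r f; funext T; simp }
  let D := ρ ∘ₗ kd (1 : Fin n → K) K ∘ₗ π
  let lam : Module.Dual K (Finset (Fin n) → K) :=
    { toFun := fun f => ∑ T, c T * f T
      map_add' := by intro f g; simp [mul_add, Finset.sum_add_distrib]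
      map_smul' := by
        intro r f
        simp only [Pi.smul_apply, smul_eq_mul, RingHom.id_apply, Finset.mul_sum]
        exact Finset.sum_congr rfl fun T _ => by ring }
  have hlam : lam ∈ (LinearMap.ker D).dualAnnihilator := by
    rw [Submodule.mem_dualAnnihilator]
    intro f hf
    rw [LinearMap.mem_ker] at hf
    have hcyc : ∀ T, kface C T → kd (1 : Fin n → K) K (π f) T = 0 := by
      intro T hT
      have := congrFun hf T
      simpa [D, ρ, hT] using this
    obtain ⟨g, hg, hgf⟩ := link_exact C k hK F (π f) (by
      intro T hT
      by_contra h
      apply hT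
      simp only [π, LinearMap.coe_mk, AddHom.coe_mk]
      rw [if_neg]
      tauto) hcyc
    have h1 : lam f = ∑ T, ∑ i ∈ T, c T * (ksg i T • g (T.erase i)) := by
      change ∑ T, c T * f T = _
      refine Finset.sum_congr rfl fun T _ => ?_
      rw [← Finset.mul_sum]
      by_cases hcT : c T = 0
      · rw [hcT, zero_mul, zero_mul]
      · obtain ⟨h2, h3, h4⟩ := hc T hcT
        have h5 := hgf T h3 h2
        have h6 : π f T = f T := by simp [π, h2, h3, h4]
        rw [← h6, ← h5, kd_apply]
        simp
    rw [h1, sum_erase_swap (fun T i => c T * (ksg i T • g (T.erase i)))]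
    refine Finset.sum_eq_zero fun T _ => ?_
    by_cases hgT : g T = 0
    · refine Finset.sum_eq_zero fun i hi => ?_
      rw [Finset.erase_insert (Finset.mem_compl.1 hi), hgT, smul_zero, mul_zero]
    · have h2 := hd T (hg T hgT)
      have h3 : ∀ i ∈ Tᶜ, c (insert i T) * (ksg i (insert i T) • g ((insert i T).erase i))
          = (ksg i (insert i T) • c (insert i T)) * g T := by
        intro i hi
        rw [Finset.erase_insert (Finset.mem_compl.1 hi)]
        simp only [zsmul_eq_mul]; ring
      rw [Finset.sum_congr rfl h3, ← Finset.sum_mul, h2, zero_mul]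
  rw [← LinearMap.range_dualMap_eq_dualAnnihilator_ker] at hlam
  obtain ⟨μ, hμ⟩ := hlam
  refine ⟨fun T => if kface C T then μ (Pi.single T 1) else 0, fun T hT => by simp [hT], ?_⟩
  intro T hT hFT hTk
  have h1 : lam (Pi.single T 1) = c T := by
    change ∑ U, c U * (Pi.single T 1 : Finset (Fin n) → K) U = _
    rw [Finset.sum_eq_single T]
    · simp
    · intro U _ hU; simp [hU]
    · simp
  rw [← h1, ← hμ, LinearMap.dualMap_apply]
  have hπ : π (Pi.single T 1) = Pi.single T 1 := by
    funext U
    by_cases hU : U = T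
    · subst hU; simp [π, hT, hFT, hTk]
    · simp [π, hU]
  have h2 : D (Pi.single T 1) =
      ∑ i ∈ Tᶜ, ksg i (insert i T) • (if kface C (insert i T) then
        (Pi.single (insert i T) 1 : Finset (Fin n) → K) else 0) := by
    change ρ (kd (1 : Fin n → K) K (π (Pi.single T 1))) = _
    rw [hπ]
    funext U
    change (if kface C U then kd (1 : Fin n → K) K (Pi.single T 1) U else 0) = _
    rw [Finset.sum_apply, kd_apply]
    by_cases hU : ∃ i, i ∉ T ∧ U = insert i T
    · obtain ⟨i, hi, rfl⟩ := hU
      rw [Finset.sum_eq_single i, Finset.sum_eq_single i]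
      · rw [Finset.erase_insert hi]
        split_ifs <;> simp
      · intro j hj hji
        have : insert i T ≠ insert j T := by
          intro h
          have h3 : i ∈ insert j T := h ▸ Finset.mem_insert_self i T
          rcases Finset.mem_insert.1 h3 with h4 | h4
          · exact hji h4.symm
          · exact hi h4
        split_ifs <;> simp [this]
      · intro h; exact absurd (Finset.mem_compl.2 hi) h
      · intro j hj hji
        have : (insert i T).erase j ≠ T := by
          intro h
          have h3 : i ∈ (insert i T).erase j := Finset.mem_erase.2 ⟨hji.symm, by simp⟩
          rw [h] at h3
          exact hi h3
        simp [this]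
      · intro h; simp at h
    · push Not at hU
      rw [Finset.sum_eq_zero, Finset.sum_eq_zero]
      · simp
      · intro i hi
        have := hU i (Finset.mem_compl.1 hi)
        split_ifs <;> simp [this]
      · intro i hi
        have : U.erase i ≠ T := by
          rintro rfl
          exact hU i (by simp) (Finset.insert_erase hi).symm
        simp [this]
  rw [h2, map_sum]
  refine Finset.sum_congr rfl fun i _ => ?_
  rw [map_zsmul]
  by_cases hk : kface C (insert i T) <;> simp [hk]

end Dual

section Cover
variable {K : Type} [Field K] {n : ℕ}

lemma ksg_union (i : Fin n) (A B : Finset (Fin n)) (h : Disjoint A B) :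
    ksg i (A ∪ B) = ksg i A * ksg i B := by
  unfold ksg
  rw [Finset.filter_union, Finset.card_union_of_disjoint, pow_add]
  exact Finset.disjoint_filter_filter h

/-- Complement relative to `F`. -/
def ktau (F T : Finset (Fin n)) : Finset (Fin n) := F ∪ Tᶜ

lemma ktau_sub (F T : Finset (Fin n)) : F ⊆ ktau F T := Finset.subset_union_left

lemma mem_ktau (F T : Finset (Fin n)) (i : Fin n) : i ∈ ktau F T ↔ i ∈ F ∨ i ∉ T := by
  simp [ktau]

lemma ktau_ktau (F T : Finset (Fin n)) (h : F ⊆ T) : ktau F (ktau F T) = T := by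
  ext i
  have := @h i
  simp only [mem_ktau]
  tauto

lemma ktau_erase (F T : Finset (Fin n)) (i : Fin n) (hi : i ∈ T) :
    ktau F (T.erase i) = insert i (ktau F T) := by
  ext j
  simp only [mem_ktau, Finset.mem_insert, Finset.mem_erase]
  tauto

/-- local sign -/
def keta (F : Finset (Fin n)) (i : Fin n) : ℤ := ksg i F * ksg i Finset.univ

/-- global sign -/
def keps (F T : Finset (Fin n)) : ℤ := ∏ i ∈ T, keta F i

lemma keta_sq (F : Finset (Fin n)) (i : Fin n) : keta F i * keta F i = 1 := by
  unfold keta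
  have h1 := ksg_mul_self i F
  have h2 := ksg_mul_self i (Finset.univ : Finset (Fin n))
  calc _ = (ksg i F * ksg i F) * (ksg i Finset.univ * ksg i Finset.univ) := by ring
    _ = 1 := by rw [h1, h2, one_mul]

lemma keps_sq (F T : Finset (Fin n)) : keps F T * keps F T = 1 := by
  unfold keps
  rw [← Finset.prod_mul_distrib]
  exact Finset.prod_eq_one fun i _ => keta_sq F i

lemma keps_erase (F T : Finset (Fin n)) (i : Fin n) (hi : i ∈ T) :
    keta F i * keps F (T.erase i) = keps F T := Finset.mul_prod_erase T (keta F) hi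

lemma ksg_ktau (F T : Finset (Fin n)) (i : Fin n) (h : F ⊆ T) :
    ksg i (insert i (ktau F T)) = keta F i * ksg i T := by
  rw [ksg_insert_self, ktau, ksg_union, keta]
  · have h1 : ksg i (Finset.univ : Finset (Fin n)) = ksg i T * ksg i Tᶜ := by
      rw [← ksg_union _ _ _ disjoint_compl_right, Finset.union_compl]
    have h2 := ksg_mul_self i T
    rw [h1]
    linear_combination (- ksg i F * ksg i Tᶜ) * h2
  · exact Disjoint.mono_left h disjoint_compl_right

lemma ktau_sum (F T : Finset (Fin n)) (hF : F ⊆ T) (h : Finset (Fin n) → K)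
    (hh : ∀ T, h T ≠ 0 → F ⊆ T) :
    ∑ i ∈ (ktau F T)ᶜ, ksg i (insert i (ktau F T)) •
      (keps F (ktau F (insert i (ktau F T))) • h (ktau F (insert i (ktau F T))))
      = keps F T • kd (1 : Fin n → K) K h T := by
  rw [kd_apply, Finset.smul_sum]
  have hs : (ktau F T)ᶜ ⊆ T := by
    intro i hi
    rw [Finset.mem_compl, mem_ktau] at hi
    tauto
  rw [← Finset.sum_subset hs]
  · refine Finset.sum_congr rfl fun i hi => ?_
    rw [Finset.mem_compl, mem_ktau] at hi
    push Not at hi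
    have hFe : F ⊆ T.erase i := fun j hj =>
      Finset.mem_erase.2 ⟨fun e => hi.1 (e ▸ hj), hF hj⟩
    rw [← ktau_erase F T i hi.2, ktau_ktau F _ hFe, ktau_erase F T i hi.2, ksg_ktau F T i hF,
      ← keps_erase F T i hi.2, Pi.one_apply, one_smul, smul_smul, smul_smul]
    congr 1
    ring
  · intro i hi hi'
    rw [Finset.mem_compl, not_not, mem_ktau] at hi'
    have : h (T.erase i) = 0 := by
      by_contra h0
      have h1 := hh _ h0
      rcases hi' with h2 | h2
      · simpa using h1 h2
      · exact h2 hi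
    rw [this]; simp

lemma cover_comb (C : Clutter n) (k : ℕ)
    (hK : KEx (fun i : Fin n => (X i ^ 2 : MvPolynomial (Fin n) K))
      (MvPolynomial (Fin n) K ⧸ C.edgeIdeal K) k) (F : Finset (Fin n)) (q : ℕ) (hq : q < k)
    (c : Finset (Fin n) → K)
    (hc : ∀ T, c T ≠ 0 → F ⊆ T ∧ kface C (ktau F T) ∧ (ktau F T).card = q)
    (hd : kd (1 : Fin n → K) K c = 0) :
    ∃ g : Finset (Fin n) → K, (∀ T, g T ≠ 0 → F ⊆ T ∧ kface C (ktau F T)) ∧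
      kd (1 : Fin n → K) K g = c := by
  classical
  obtain ⟨g', hg1, hg2⟩ := link_dual C k hK F
    (fun T => if F ⊆ T then keps F (ktau F T) • c (ktau F T) else 0) (by
      intro T hT
      have hFT : F ⊆ T := by
        by_contra h; exact hT (if_neg h)
      rw [if_pos hFT] at hT
      have := hc (ktau F T) (fun h => hT (by rw [h, smul_zero]))
      rw [ktau_ktau F T hFT] at this
      exact ⟨hFT, this.2.1, by omega⟩) (by
      intro T hT
      have := ktau_sum F (ktau F T) (ktau_sub F T) c (fun T h => (hc T h).1)
      rw [ktau_ktau F T hT, hd] at this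
      rw [Pi.zero_apply, smul_zero] at this
      rw [← this]
      refine Finset.sum_congr rfl fun i hi => ?_
      rw [if_pos (hT.trans (Finset.subset_insert _ _))])
  let g : Finset (Fin n) → K := fun T =>
    if F ⊆ T ∧ (ktau F T).card = q + 1 then keps F T • g' (ktau F T) else 0
  have hgF : ∀ T, g T ≠ 0 → F ⊆ T ∧ (ktau F T).card = q + 1 := by
    intro T hT
    by_contra h; exact hT (if_neg h)
  have hgk : ∀ T, g T ≠ 0 → kface C (ktau F T) := by
    intro T hT
    by_contra h
    apply hT
    simp only [g]
    rw [hg1 _ h]; simp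
  refine ⟨g, fun T hT => ⟨(hgF T hT).1, hgk T hT⟩, ?_⟩
  funext T
  by_cases hc0 : F ⊆ T ∧ kface C (ktau F T) ∧ (ktau F T).card = q
  · obtain ⟨h1, h2, h3⟩ := hc0
    have h4 := ktau_sum F T h1 g (fun T h => (hgF T h).1)
    have h5 := hg2 (ktau F T) h2 (ktau_sub F T) (by omega)
    rw [if_pos (ktau_sub F T), ktau_ktau F T h1] at h5
    have h6 : keps F T • kd (1 : Fin n → K) K g T = keps F T • c T := by
      rw [← h4, ← h5]
      refine Finset.sum_congr rfl fun i hi => ?_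
      congr 1
      have hi' := Finset.mem_compl.1 hi
      have h7 : F ⊆ insert i (ktau F T) := (ktau_sub F T).trans (Finset.subset_insert _ _)
      simp only [g]
      rw [ktau_ktau F _ h7, if_pos ⟨ktau_sub _ _, by rw [Finset.card_insert_of_notMem hi', h3]⟩,
        smul_smul, keps_sq, one_smul]
    have h8 := congrArg (fun z => keps F T • z) h6
    simpa only [smul_smul, keps_sq, one_smul] using h8
  · have h1 : c T = 0 := by
      by_contra h; exact hc0 (hc T h)
    rw [h1, kd_apply]
    refine Finset.sum_eq_zero fun i hi => ?_
    have : g (T.erase i) = 0 := by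
      by_contra h
      obtain ⟨h2, h3⟩ := hgF _ h
      have h4 := hgk _ h
      rw [ktau_erase F T i hi] at h3 h4
      have hiF : i ∉ F := fun hh => by simpa using h2 hh
      have hFT : F ⊆ T := h2.trans (Finset.erase_subset _ _)
      refine hc0 ⟨hFT, kface_mono C (Finset.subset_insert _ _) h4, ?_⟩
      rw [Finset.card_insert_of_notMem] at h3
      · omega
      · rw [mem_ktau]; tauto
    rw [this]; simp

lemma cover_iff (C : Clutter n) (S : Finset (Fin n)) : C.IsVertexCover S ↔ kface C Sᶜ := by
  unfold Clutter.IsVertexCover kface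
  refine forall₂_congr fun E hE => ?_
  rw [Finset.not_subset]
  simp

lemma cover_exact (C : Clutter n) (d m : ℕ) (hm : d < m) (hdn : d ≤ n)
    (hK : KEx (fun i : Fin n => (X i ^ 2 : MvPolynomial (Fin n) K))
      (MvPolynomial (Fin n) K ⧸ C.edgeIdeal K) (n - d))
    (f : Finset (Fin n) → MvPolynomial (Fin n) K) (hf : ∀ T, f T ∈ C.coverIdeal K)
    (hdeg : ∀ T e, coeff e (f T) ≠ 0 → e.degree = m)
    (hd : kd (X : Fin n → MvPolynomial (Fin n) K) _ f = 0) :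
    ∃ g : Finset (Fin n) → MvPolynomial (Fin n) K, (∀ T, g T ∈ C.coverIdeal K) ∧
      kd (X : Fin n → MvPolynomial (Fin n) K) _ g = f := by
  obtain ⟨g, -, h1, h2⟩ := kmulti {e | C.IsVertexCover e.support} (n + 2) f (by
    intro b
    have hcyc : kd (1 : Fin n → K) K (kPsi b f) = 0 := by rw [kPsi_kd, hd, kPsi_zero]
    have hcard : ∀ T : Finset (Fin n), T.card + 1 < n + 2 := fun T => by
      have := T.card_le_univ
      simp at this; omega
    have hcov : ∀ T, kPsi b f T ≠ 0 → C.IsVertexCover (ksh b T).support := fun T hT =>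
      (mem_coverIdeal C _).1 (hf T) _ (mem_support_iff.2 (kPsi_ne b f T hT).2)
    by_cases hb : ∃ v, 2 ≤ b v
    · obtain ⟨v, hv⟩ := hb
      refine ⟨kh v (kPsi b f), ?_, kh_spec v _ hcyc⟩
      intro T hT
      obtain ⟨h3, h4⟩ := kh_ne v _ T hT
      refine ⟨?_, ?_, hcard T⟩
      · intro i
        have := (kPsi_ne b f _ h4).1 i
        by_cases hi : i = v
        · subst hi; left; omega
        · simpa [hi] using this
      · have h5 := hcov _ h4
        suffices h6 : (ksh b T).support = (ksh b (insert v T)).support by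
          rw [← h6] at h5; exact h5
        ext i
        rw [Finsupp.mem_support_iff, Finsupp.mem_support_iff, ksh_apply, ksh_apply]
        by_cases hi : i = v
        · subst hi
          simp [h3]; omega
        · simp [hi]
    · push Not at hb
      let F : Finset (Fin n) := Finset.univ.filter fun i => b i = 0
      have hF : ∀ i, i ∈ F ↔ b i = 0 := fun i => by simp [F]
      have hok : ∀ T, kok b T ↔ F ⊆ T := by
        intro T
        constructor
        · intro h i hi
          exact (h i).resolve_left (not_not.2 ((hF i).1 hi))
        · intro h i
          by_cases hi : b i = 0
          · exact Or.inr (h ((hF i).2 hi))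
          · exact Or.inl hi
      have hsupp : ∀ T, (ksh b T).support = (ktau F T)ᶜ := by
        intro T
        ext i
        rw [Finsupp.mem_support_iff, ksh_apply, Finset.mem_compl, mem_ktau, hF]
        have := hb i
        by_cases hi : i ∈ T <;> simp [hi]; omega
      have hle : ∀ T i, ksh b T i = if i ∈ (ktau F T)ᶜ then 1 else 0 := by
        intro T i
        have h3 := hb i
        by_cases hi : i ∈ (ktau F T)ᶜ
        · rw [if_pos hi]
          rw [← hsupp T, Finsupp.mem_support_iff] at hi
          rw [ksh_apply] at hi ⊢
          split_ifs at hi ⊢ <;> omega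
        · rw [if_neg hi]
          rw [← hsupp T, Finsupp.mem_support_iff, not_not] at hi
          exact hi
      have hdg : ∀ T, (ksh b T).degree + (ktau F T).card = n := by
        intro T
        have : (ksh b T).degree = (ktau F T)ᶜ.card := by
          rw [Finsupp.degree_eq_sum]
          simp only [hle]
          rw [Finset.sum_ite_mem, Finset.univ_inter, Finset.sum_const, smul_eq_mul, mul_one]
        rw [this, Finset.card_compl_add_card, Fintype.card_fin]
      by_cases hz : kPsi b f = 0
      · exact ⟨0, fun T hT => absurd rfl hT, by rw [hz, map_zero]⟩
      obtain ⟨T0, hT0⟩ := Function.ne_iff.1 hz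
      have hmT : ∀ T, kPsi b f T ≠ 0 → m + (ktau F T).card = n := by
        intro T hT
        rw [← hdeg T _ (kPsi_ne b f T hT).2, hdg]
      have hmn := hmT T0 hT0
      obtain ⟨g, h3, h4⟩ := cover_comb C (n - d) hK F (n - m) (by omega) (kPsi b f) (by
        intro T hT
        have h5 := hcov T hT
        rw [cover_iff, hsupp, compl_compl] at h5
        have := hmT T hT
        exact ⟨(hok T).1 (kPsi_ne b f T hT).1, h5, by omega⟩) hcyc
      refine ⟨g, fun T hT => ⟨(hok T).2 (h3 T hT).1, ?_, hcard T⟩, h4⟩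
      change C.IsVertexCover _
      rw [cover_iff, hsupp, compl_compl]
      exact (h3 T hT).2)
  exact ⟨g, fun T => (mem_coverIdeal C _).2 (h1 T), h2⟩
end Cover

section Res
variable {K : Type} [Field K] {n : ℕ}

/-- All degrees of `w` lie in `D`. -/
def SupV {r : ℕ} (tw : Fin r → ℕ) (D : ℕ → Prop) (w : Fin r → MvPolynomial (Fin n) K) : Prop :=
  ∀ j e, coeff e (w j) ≠ 0 → D (e.degree + tw j)

/-- Graded component. -/
noncomputable def gcm {r : ℕ} (tw : Fin r → ℕ) (m : ℕ) :
    (Fin r → MvPolynomial (Fin n) K) →+ (Fin r → MvPolynomial (Fin n) K) where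
  toFun w := fun j => if tw j ≤ m then homogeneousComponent (m - tw j) (w j) else 0
  map_zero' := by funext j; simp
  map_add' := by
    intro a b; funext j
    simp only [Pi.add_apply, map_add]
    split_ifs <;> simp

lemma gcm_coeff {r : ℕ} (tw : Fin r → ℕ) (m : ℕ) (w : Fin r → MvPolynomial (Fin n) K)
    (j : Fin r) (e : Fin n →₀ ℕ) :
    coeff e (gcm tw m w j) = if e.degree + tw j = m then coeff e (w j) else 0 := by
  change coeff e (if tw j ≤ m then homogeneousComponent (m - tw j) (w j) else 0) = _
  by_cases h : tw j ≤ m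
  · rw [if_pos h, coeff_homogeneousComponent]
    have : (e.degree = m - tw j) ↔ (e.degree + tw j = m) := by omega
    simp only [this]
  · rw [if_neg h, if_neg (by omega), coeff_zero]

lemma gcm_sup {r : ℕ} (tw : Fin r → ℕ) (m : ℕ) (w : Fin r → MvPolynomial (Fin n) K) :
    SupV tw (· = m) (gcm tw m w) := by
  intro j e h
  rw [gcm_coeff] at h
  by_contra h'
  exact h (if_neg h')

lemma gcm_eq {r : ℕ} (tw : Fin r → ℕ) (m : ℕ) (w : Fin r → MvPolynomial (Fin n) K)
    (h : SupV tw (· = m) w) : gcm tw m w = w := by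
  funext j
  ext e
  rw [gcm_coeff]
  split_ifs with h1
  · rfl
  · by_contra h2
    exact h1 (h j e (Ne.symm h2))

lemma gcm_eq_zero {r : ℕ} (tw : Fin r → ℕ) (m : ℕ) (w : Fin r → MvPolynomial (Fin n) K)
    (h : SupV tw (· ≠ m) w) : gcm tw m w = 0 := by
  funext j
  ext e
  rw [gcm_coeff]
  split_ifs with h1
  · by_contra h2
    exact h j e (by simpa using h2) h1
  · simp

lemma gcm_compl {r : ℕ} (tw : Fin r → ℕ) (m : ℕ) (w : Fin r → MvPolynomial (Fin n) K) :
    SupV tw (· ≠ m) (w - gcm tw m w) := by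
  intro j e h h'
  apply h
  rw [Pi.sub_apply, coeff_sub, gcm_coeff, if_pos h', sub_self]

lemma mem_of_gcm {r : ℕ} (tw : Fin r → ℕ) (w : Fin r → MvPolynomial (Fin n) K)
    (N : Submodule (MvPolynomial (Fin n) K) (Fin r → MvPolynomial (Fin n) K))
    (h : ∀ m, gcm tw m w ∈ N) : w ∈ N := by
  classical
  let M := ∑ j, ((w j).totalDegree + tw j)
  have : w = ∑ m ∈ Finset.range (M + 1), gcm tw m w := by
    funext j
    ext e
    rw [Finset.sum_apply, coeff_sum]
    simp only [gcm_coeff]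
    rw [Finset.sum_ite_eq]
    split_ifs with h1
    · rfl
    · by_contra h2
      apply h1
      rw [Finset.mem_range]
      have h3 : e.degree ≤ (w j).totalDegree := by
        have := le_totalDegree (mem_support_iff.2 h2)
        rw [Finsupp.degree_eq_sum]
        rw [Finsupp.sum_fintype] at this
        · exact this
        · simp
      have h4 : (w j).totalDegree + tw j ≤ M :=
        Finset.single_le_sum (f := fun j => (w j).totalDegree + tw j) (fun _ _ => Nat.zero_le _)
          (Finset.mem_univ j)
      omega
  rw [this]
  exact Submodule.sum_mem _ fun m _ => h m

lemma gcm_X {r : ℕ} (tw : Fin r → ℕ) (m : ℕ) (i : Fin n) (w : Fin r → MvPolynomial (Fin n) K) :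
    gcm tw (m + 1) ((X i : MvPolynomial (Fin n) K) • w) =
      (X i : MvPolynomial (Fin n) K) • gcm tw m w := by
  funext j
  ext e
  rw [gcm_coeff, Pi.smul_apply, Pi.smul_apply, smul_eq_mul, smul_eq_mul, coeff_X_mul',
    coeff_X_mul']
  by_cases h : i ∈ e.support
  · rw [if_pos h, if_pos h, gcm_coeff]
    have h1 : e = (e - Finsupp.single i 1) + Finsupp.single i 1 := by
      rw [tsub_add_cancel_of_le]
      rw [Finsupp.single_le_iff]
      rw [Finsupp.mem_support_iff] at h
      omega
    have h2 : e.degree = (e - Finsupp.single i 1).degree + 1 := by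
      conv_lhs => rw [h1]
      simp
    have : (e.degree + tw j = m + 1) ↔ ((e - Finsupp.single i 1).degree + tw j = m) := by omega
    simp only [this]
  · rw [if_neg h, if_neg h]; simp

lemma kd_cmp {r : ℕ} (tw : Fin r → ℕ) (m : ℕ)
    (f : Finset (Fin n) → Fin r → MvPolynomial (Fin n) K) (T : Finset (Fin n)) :
    kd (X : Fin n → MvPolynomial (Fin n) K) _ (fun T => gcm tw m (f T)) T =
      gcm tw (m + 1) (kd (X : Fin n → MvPolynomial (Fin n) K) _ f T) := by
  rw [kd_apply, kd_apply, map_sum]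
  refine Finset.sum_congr rfl fun i _ => ?_
  rw [map_zsmul, gcm_X]

lemma phi_eq {r r' : ℕ}
    (φ : (Fin r' → MvPolynomial (Fin n) K) →ₗ[MvPolynomial (Fin n) K]
      (Fin r → MvPolynomial (Fin n) K)) (w : Fin r' → MvPolynomial (Fin n) K) :
    φ w = ∑ k, w k • φ (Pi.single k 1) := by
  conv_lhs => rw [pi_eq_sum_univ' w]
  rw [map_sum]
  refine Finset.sum_congr rfl fun k _ => ?_
  rw [map_smul]

lemma phi_sup {r r' : ℕ} (tw : Fin r → ℕ) (tw' : Fin r' → ℕ)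
    (φ : (Fin r' → MvPolynomial (Fin n) K) →ₗ[MvPolynomial (Fin n) K]
      (Fin r → MvPolynomial (Fin n) K))
    (hφ : ∀ k, SupV tw (· = tw' k) (φ (Pi.single k 1))) (D : ℕ → Prop)
    (w : Fin r' → MvPolynomial (Fin n) K) (hw : SupV tw' D w) : SupV tw D (φ w) := by
  classical
  intro j e h
  rw [phi_eq, Finset.sum_apply, coeff_sum] at h
  obtain ⟨k, -, hk⟩ := Finset.exists_ne_zero_of_sum_ne_zero h
  rw [Pi.smul_apply, smul_eq_mul, coeff_mul] at hk
  obtain ⟨⟨e1, e2⟩, he, hk⟩ := Finset.exists_ne_zero_of_sum_ne_zero hk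
  rw [Finset.HasAntidiagonal.mem_antidiagonal] at he
  have h1 := hw k e1 (left_ne_zero_of_mul hk)
  have h2 : e2.degree + tw j = tw' k := hφ k j e2 (right_ne_zero_of_mul hk)
  have h3 : e.degree = e1.degree + e2.degree := by rw [← he]; simp
  rw [h3, add_assoc, h2]
  exact h1

lemma phi_cmp {r r' : ℕ} (tw : Fin r → ℕ) (tw' : Fin r' → ℕ)
    (φ : (Fin r' → MvPolynomial (Fin n) K) →ₗ[MvPolynomial (Fin n) K]
      (Fin r → MvPolynomial (Fin n) K))
    (hφ : ∀ k, SupV tw (· = tw' k) (φ (Pi.single k 1))) (m : ℕ)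
    (w : Fin r' → MvPolynomial (Fin n) K) : gcm tw m (φ w) = φ (gcm tw' m w) := by
  have h1 : φ w = φ (gcm tw' m w) + φ (w - gcm tw' m w) := by rw [← map_add]; simp
  rw [h1, map_add, gcm_eq _ _ _ (phi_sup tw tw' φ hφ _ _ (gcm_sup tw' m w)),
    gcm_eq_zero _ _ _ (phi_sup tw tw' φ hφ _ _ (gcm_compl tw' m w)), add_zero]

/-- State of the resolution construction. -/
structure RSt (n : ℕ) (K : Type) [Field K] (s k : ℕ) where
  r : ℕ
  tw : Fin r → ℕ
  N : Submodule (MvPolynomial (Fin n) K) (Fin r → MvPolynomial (Fin n) K)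
  gr : ∀ w ∈ N, ∀ m, gcm tw m w ∈ N
  V : ∀ m, s < m → ∀ f : Finset (Fin n) → Fin r → MvPolynomial (Fin n) K, (∀ T, f T ∈ N) →
    (∀ T, SupV tw (· = m) (f T)) → kd (X : Fin n → MvPolynomial (Fin n) K) _ f = 0 →
    ∃ g : Finset (Fin n) → Fin r → MvPolynomial (Fin n) K, (∀ T, g T ∈ N) ∧
      kd (X : Fin n → MvPolynomial (Fin n) K) _ g = f
  W : ∀ f : Finset (Fin n) → Fin r → MvPolynomial (Fin n) K, (∀ T, f T ∈ N) →
    (∀ T, k ≤ T.card → f T = 0) → kd (X : Fin n → MvPolynomial (Fin n) K) _ f = 0 →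
    ∃ g : Finset (Fin n) → Fin r → MvPolynomial (Fin n) K, (∀ T, g T ∈ N) ∧
      (∀ T, k ≤ T.card + 1 → g T = 0) ∧
      kd (X : Fin n → MvPolynomial (Fin n) K) _ g = f

/-- cochain concentrated at the top -/
noncomputable def ktop {r : ℕ} (z : Fin r → MvPolynomial (Fin n) K) :
    Finset (Fin n) → Fin r → MvPolynomial (Fin n) K := fun T => if T = Finset.univ then z else 0

lemma kd_ktop {r : ℕ} (z : Fin r → MvPolynomial (Fin n) K) :
    kd (X : Fin n → MvPolynomial (Fin n) K) _ (ktop z) = 0 := by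
  funext T
  rw [kd_apply]
  refine Finset.sum_eq_zero fun i hi => ?_
  have : T.erase i ≠ Finset.univ := by
    intro h
    have : i ∈ T.erase i := by rw [h]; simp
    simp at this
  simp [ktop, this]

lemma RSt.gen {s k : ℕ} (S : RSt n K s k) :
    Submodule.span (MvPolynomial (Fin n) K) {w | w ∈ S.N ∧ ∃ t ≤ s, SupV S.tw (· = t) w} = S.N := by
  apply le_antisymm
  · rw [Submodule.span_le]
    exact fun w hw => hw.1
  · have key : ∀ m, ∀ z ∈ S.N, SupV S.tw (· = m) z →
        z ∈ Submodule.span (MvPolynomial (Fin n) K)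
          {w | w ∈ S.N ∧ ∃ t ≤ s, SupV S.tw (· = t) w} := by
      intro m
      induction m with
      | zero => exact fun z hz hm => Submodule.subset_span ⟨hz, 0, Nat.zero_le _, hm⟩
      | succ m ih =>
        intro z hz hm
        by_cases hs : m + 1 ≤ s
        · exact Submodule.subset_span ⟨hz, m + 1, hs, hm⟩
        obtain ⟨g, hg, hgz⟩ := S.V (m + 1) (by omega) (ktop z)
          (fun T => by unfold ktop; split_ifs; exacts [hz, zero_mem _])
          (fun T => by
            unfold ktop; split_ifs
            · exact hm
            · intro j e h; simp at h)
          (kd_ktop z)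
        have h1 := congrFun hgz Finset.univ
        have h2 := kd_cmp S.tw m g Finset.univ
        rw [h1] at h2
        simp only [ktop, if_true] at h2
        rw [gcm_eq _ _ _ hm, kd_apply] at h2
        rw [← h2]
        refine Submodule.sum_mem _ fun i _ => ?_
        refine zsmul_mem (Submodule.smul_mem _ _ (ih _ (S.gr _ (hg _) _) (gcm_sup _ _ _))) _
    intro z hz
    exact mem_of_gcm S.tw z _ fun m => key m _ (S.gr z hz m) (gcm_sup _ _ _)

lemma RSt.bot {s k : ℕ} (S : RSt n K s k) (hk : n < k) : S.N = ⊥ := by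
  have key : ∀ m, ∀ z ∈ S.N, ∀ j (e : Fin n →₀ ℕ), e.degree < m → coeff e (z j) = 0 := by
    intro m
    induction m with
    | zero => intro z hz j e h; omega
    | succ m ih =>
      intro z hz j e he
      obtain ⟨g, hg, -, hgz⟩ := S.W (ktop z)
        (fun T => by unfold ktop; split_ifs; exacts [hz, zero_mem _])
        (fun T hT => by
          have := T.card_le_univ
          simp at this; omega) (kd_ktop z)
      have h1 := congrFun hgz Finset.univ
      simp only [ktop, if_true] at h1
      rw [← h1, kd_apply, Finset.sum_apply, coeff_sum]
      refine Finset.sum_eq_zero fun i _ => ?_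
      rw [Pi.smul_apply, coeff_zsmul', Pi.smul_apply, smul_eq_mul, coeff_X_mul']
      split_ifs with h
      · rw [ih _ (hg _), smul_zero]
        have h1 : e = (e - Finsupp.single i 1) + Finsupp.single i 1 := by
          rw [tsub_add_cancel_of_le]
          rw [Finsupp.single_le_iff]
          rw [Finsupp.mem_support_iff] at h
          omega
        have h2 : e.degree = (e - Finsupp.single i 1).degree + 1 := by
          conv_lhs => rw [h1]
          simp
        omega
      · rw [smul_zero]
  rw [eq_bot_iff]
  intro z hz
  rw [Submodule.mem_bot]
  funext j
  ext e
  rw [key (e.degree + 1) z hz j e (by omega)]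
  simp

end Res

section Step
variable {K : Type} [Field K] {n : ℕ}

lemma kd_coord {r : ℕ} (f : Finset (Fin n) → Fin r → MvPolynomial (Fin n) K) (j : Fin r) :
    kd (X : Fin n → MvPolynomial (Fin n) K) _ (fun T => f T j) =
      fun T => kd (X : Fin n → MvPolynomial (Fin n) K) _ f T j :=
  kd_map X (LinearMap.proj (R := MvPolynomial (Fin n) K)
    (φ := fun _ : Fin r => MvPolynomial (Fin n) K) j) f

lemma free_exact_vec {r : ℕ} (k : ℕ) (f : Finset (Fin n) → Fin r → MvPolynomial (Fin n) K)
    (hf : ∀ T, k ≤ T.card → f T = 0)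
    (hd : kd (X : Fin n → MvPolynomial (Fin n) K) _ f = 0)
    (hc : ∀ j, coeff 0 (f Finset.univ j) = 0) :
    ∃ g : Finset (Fin n) → Fin r → MvPolynomial (Fin n) K, (∀ T, k ≤ T.card + 1 → g T = 0) ∧
      kd (X : Fin n → MvPolynomial (Fin n) K) _ g = f := by
  have : ∀ j, ∃ g : Finset (Fin n) → MvPolynomial (Fin n) K, (∀ T, k ≤ T.card + 1 → g T = 0) ∧
      kd (X : Fin n → MvPolynomial (Fin n) K) _ g = fun T => f T j := by
    intro j
    refine free_exact k (fun T => f T j) (fun T hT => by rw [hf T hT]; rfl) ?_ (hc j)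
    rw [kd_coord, hd]; rfl
  choose g hg hgf using this
  refine ⟨fun T j => g j T, fun T hT => funext fun j => hg j T hT, ?_⟩
  funext T j
  have h1 := congrFun (kd_coord (fun T j => g j T) j) T
  have h2 := congrFun (hgf j) T
  exact h1.symm.trans h2

/-- Homogeneous generating families. -/
def RGen {s k : ℕ} (S : RSt n K s k) (p : ℕ) : Prop :=
  ∃ v : Fin p → Fin S.r → MvPolynomial (Fin n) K,
    (∀ i, v i ∈ S.N ∧ ∃ t ≤ s, SupV S.tw (· = t) (v i)) ∧
    Submodule.span (MvPolynomial (Fin n) K) (Set.range v) = S.N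

lemma RGen_exists {s k : ℕ} (S : RSt n K s k) : ∃ p, RGen S p := by
  have hfg : S.N.FG := IsNoetherian.noetherian S.N
  rw [← S.gen, Submodule.fg_span_iff_fg_span_finset_subset] at hfg
  obtain ⟨G, hG, hs⟩ := hfg
  refine ⟨G.card, fun i => (G.equivFin.symm i : _), fun i => hG (G.equivFin.symm i).2, ?_⟩
  rw [S.gen] at hs
  rw [hs]
  congr 1
  ext w
  constructor
  · rintro ⟨i, rfl⟩
    exact (G.equivFin.symm i).2
  · intro hw
    exact ⟨G.equivFin ⟨w, hw⟩, by simp⟩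

lemma RGen_min {s k : ℕ} (S : RSt n K s k) : ∃ (p : ℕ)
    (v : Fin p → Fin S.r → MvPolynomial (Fin n) K) (t : Fin p → ℕ),
    (∀ i, v i ∈ S.N ∧ t i ≤ s ∧ SupV S.tw (· = t i) (v i)) ∧
    Submodule.span (MvPolynomial (Fin n) K) (Set.range v) = S.N ∧
    ∀ q, RGen S q → p ≤ q := by
  classical
  obtain ⟨v, hv, hs⟩ := Nat.find_spec (RGen_exists S)
  choose h1 t h2 h3 using hv
  exact ⟨_, v, t, fun i => ⟨h1 i, h2 i, h3 i⟩, hs, fun q hq => Nat.find_min' _ hq⟩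

lemma RGen_rel {s k p : ℕ} (S : RSt n K s k)
    (v : Fin p → Fin S.r → MvPolynomial (Fin n) K) (t : Fin p → ℕ)
    (hv : ∀ i, v i ∈ S.N ∧ t i ≤ s ∧ SupV S.tw (· = t i) (v i))
    (hs : Submodule.span (MvPolynomial (Fin n) K) (Set.range v) = S.N)
    (hmin : ∀ q, RGen S q → p ≤ q) (w : Fin p → MvPolynomial (Fin n) K)
    (hw : Fintype.linearCombination (MvPolynomial (Fin n) K) v w = 0) (j : Fin p) :
    coeff 0 (w j) = 0 := by
  classical
  by_contra hc
  cases p with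
  | zero => exact j.elim0
  | succ p =>
    set φ := Fintype.linearCombination (MvPolynomial (Fin n) K) v with hφ
    have hsing : ∀ i, φ (Pi.single i 1) = v i := fun i => by
      rw [hφ, Fintype.linearCombination_apply_single, one_smul]
    have h1 := phi_cmp S.tw t φ (fun i => by rw [hsing]; exact (hv i).2.2) (t j) w
    rw [hw, map_zero, phi_eq] at h1
    simp only [hsing] at h1
    rw [Fin.sum_univ_succAbove _ j] at h1
    have h2 : gcm t (t j) w j = C (coeff 0 (w j)) := by
      ext e
      rw [gcm_coeff, coeff_C]
      have : (e.degree + t j = t j) ↔ (0 = e) := by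
        rw [Nat.add_eq_right, Finsupp.degree_eq_zero_iff, eq_comm]
      simp only [this]
      split_ifs with h
      · rw [h]
      · rfl
    rw [h2] at h1
    have hle : S.N ≤ Submodule.span (MvPolynomial (Fin n) K) (Set.range (v ∘ j.succAbove)) := by
      rw [← hs, Submodule.span_le]
      have hrest : ∀ i, v (j.succAbove i) ∈
          Submodule.span (MvPolynomial (Fin n) K) (Set.range (v ∘ j.succAbove)) :=
        fun i => Submodule.subset_span ⟨i, rfl⟩
      rintro _ ⟨i, rfl⟩
      by_cases hi : i = j
      · subst hi
        have h3 : v i = (C (coeff 0 (w i))⁻¹ : MvPolynomial (Fin n) K) •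
            ((C (coeff 0 (w i)) : MvPolynomial (Fin n) K) • v i) := by
          rw [smul_smul, ← C_mul, inv_mul_cancel₀ hc, C_1, one_smul]
        rw [SetLike.mem_coe, h3]
        apply Submodule.smul_mem
        rw [eq_neg_of_add_eq_zero_left h1.symm]
        apply Submodule.neg_mem
        exact Submodule.sum_mem _ fun l _ => Submodule.smul_mem _ _ (hrest l)
      · obtain ⟨l, rfl⟩ := Fin.exists_succAbove_eq hi
        exact hrest l
    have := hmin p ⟨v ∘ j.succAbove, fun i => ⟨(hv _).1, t _, (hv _).2⟩, le_antisymm (by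
      rw [Submodule.span_le]
      rintro _ ⟨i, rfl⟩
      exact (hv _).1) hle⟩
    omega

lemma RSt.step {s k : ℕ} (S : RSt n K s k) : ∃ (S' : RSt n K (s + 1) (k + 1))
    (φ : (Fin S'.r → MvPolynomial (Fin n) K) →ₗ[MvPolynomial (Fin n) K]
      (Fin S.r → MvPolynomial (Fin n) K)),
    (∀ i, SupV S.tw (· = S'.tw i) (φ (Pi.single i 1))) ∧ LinearMap.range φ = S.N ∧
    LinearMap.ker φ = S'.N ∧ (∀ i, S'.tw i ≤ s) ∧ (S.N = ⊥ → S'.r = 0) := by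
  classical
  obtain ⟨p, v, t, hv, hs, hmin⟩ := RGen_min S
  have hrel := RGen_rel S v t hv hs hmin
  set φ := Fintype.linearCombination (MvPolynomial (Fin n) K) v with hφ
  have hsing : ∀ i, φ (Pi.single i 1) = v i := fun i => by
    rw [hφ, Fintype.linearCombination_apply_single, one_smul]
  have hhom : ∀ i, SupV S.tw (· = t i) (φ (Pi.single i 1)) := fun i => by
    rw [hsing]; exact (hv i).2.2
  have hrange : LinearMap.range φ = S.N := by
    rw [hφ, Fintype.range_linearCombination, hs]
  have hmem : ∀ w, φ w ∈ S.N := fun w => hrange ▸ LinearMap.mem_range_self φ w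
  have hlift : ∀ y ∈ S.N, ∃ y', φ y' = y ∧ (y = 0 → y' = 0) := by
    intro y hy
    by_cases h0 : y = 0
    · exact ⟨0, by rw [h0, map_zero], fun _ => rfl⟩
    · rw [← hrange] at hy
      obtain ⟨y', hy'⟩ := hy
      exact ⟨y', hy', fun h => absurd h h0⟩
  -- common correction
  have hcorr : ∀ (z w y : Finset (Fin n) → Fin p → MvPolynomial (Fin n) K),
      kd (X : Fin n → MvPolynomial (Fin n) K) _ w = z →
      (kd (X : Fin n → MvPolynomial (Fin n) K) _ (fun T => φ (y T)) = fun T => φ (w T)) →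
      (∀ T, (w - kd (X : Fin n → MvPolynomial (Fin n) K) _ y) T ∈ LinearMap.ker φ) ∧
      kd (X : Fin n → MvPolynomial (Fin n) K) _ (w - kd (X : Fin n → MvPolynomial (Fin n) K) _ y)
        = z := by
    intro z w y h1 h2
    constructor
    · intro T
      rw [LinearMap.mem_ker, Pi.sub_apply, map_sub]
      have := congrFun (kd_map X φ y) T
      rw [h2] at this
      exact sub_eq_zero.2 this
    · rw [map_sub, kd_kd, sub_zero, h1]
  refine ⟨⟨p, t, LinearMap.ker φ, ?_, ?_, ?_⟩, φ, hhom, hrange, rfl, fun i => (hv i).2.1, ?_⟩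
  · intro w hw m
    rw [LinearMap.mem_ker] at hw ⊢
    rw [← phi_cmp S.tw t φ hhom, hw, map_zero]
  · intro m hm z hz hdeg hd
    obtain ⟨w, -, hw⟩ := free_exact_vec (n + 1) z (fun T hT => by
      have := T.card_le_univ
      simp at this; omega) hd (fun j => hrel _ (hz _) j)
    obtain ⟨m, rfl⟩ : ∃ m', m = m' + 1 := ⟨m - 1, by omega⟩
    have hw' : kd (X : Fin n → MvPolynomial (Fin n) K) _ (fun T => gcm t m (w T)) = z := by
      funext T
      rw [kd_cmp, hw, gcm_eq _ _ _ (hdeg T)]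
    obtain ⟨y, hy, hyu⟩ := S.V m (by omega) (fun T => φ (gcm t m (w T))) (fun T => hmem _)
      (fun T => phi_sup S.tw t φ hhom _ _ (gcm_sup _ _ _)) (by
        rw [kd_map, hw']
        funext T
        exact hz T)
    choose y' hy' _ using fun T => hlift (y T) (hy T)
    have := hcorr z _ y' hw' (by
      rw [← hyu]
      congr 1
      funext T
      exact hy' T)
    exact ⟨_, this⟩
  · intro z hz hcard hd
    obtain ⟨w, hwc, hw⟩ := free_exact_vec (k + 1) z hcard hd (fun j => hrel _ (hz _) j)
    obtain ⟨y, hy, hyc, hyu⟩ := S.W (fun T => φ (w T)) (fun T => hmem _) (fun T hT => by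
      rw [hwc T (by omega), map_zero]) (by
        rw [kd_map, hw]
        funext T
        exact hz T)
    choose y' hy' hy0 using fun T => hlift (y T) (hy T)
    have := hcorr z _ y' hw (by
      rw [← hyu]
      congr 1
      funext T
      exact hy' T)
    refine ⟨_, this.1, ?_, this.2⟩
    intro T hT
    rw [Pi.sub_apply, hwc T hT, zero_sub, neg_eq_zero, kd_apply]
    refine Finset.sum_eq_zero fun i hi => ?_
    have h1 : T.card = (T.erase i).card + 1 := (Finset.card_erase_add_one hi).symm
    rw [hy0 _ (hyc _ (by omega)), smul_zero, smul_zero]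
  · intro hbot
    have := hmin 0 ⟨fun i => i.elim0, fun i => i.elim0, by
      rw [hbot, Set.range_eq_empty, Submodule.span_empty]⟩
    exact Nat.le_zero.1 this

end Step

section Final
variable {K : Type} [Field K] {n : ℕ}

lemma weight_one_degree (e : Fin n →₀ ℕ) :
    (Finsupp.weight (1 : Fin n → ℕ)) e = e.degree := by
  rw [Finsupp.degree_eq_weight_one]; rfl

/-- The initial state. -/
noncomputable def rbase (C : Clutter n) (d : ℕ) (hdn : d ≤ n)
    (hK : KEx (fun i : Fin n => (X i ^ 2 : MvPolynomial (Fin n) K))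
      (MvPolynomial (Fin n) K ⧸ C.edgeIdeal K) (n - d)) : RSt n K d 0 where
  r := 1
  tw := fun _ => 0
  N := Submodule.comap (LinearMap.proj (R := MvPolynomial (Fin n) K)
    (φ := fun _ : Fin 1 => MvPolynomial (Fin n) K) 0) (C.coverIdeal K)
  gr := by
    intro w hw m
    rw [Submodule.mem_comap, LinearMap.proj_apply, mem_coverIdeal] at hw ⊢
    intro e he
    apply hw
    rw [mem_support_iff, gcm_coeff] at he
    rw [mem_support_iff]
    intro h
    rw [h] at he
    simp at he
  V := by
    intro m hm f hf hdeg hd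
    obtain ⟨g, hg, hgf⟩ := cover_exact C d m hm hdn hK (fun T => f T 0) (fun T => hf T)
      (fun T e he => by simpa using hdeg T 0 e he) (by rw [kd_coord, hd]; rfl)
    refine ⟨fun T _ => g T, fun T => hg T, ?_⟩
    funext T j
    have h1 := congrFun (kd_coord (fun T (_ : Fin 1) => g T) j) T
    have h2 := congrFun hgf T
    rw [Subsingleton.elim j 0]
    rw [Subsingleton.elim j 0] at h1
    exact h1.symm.trans h2
  W := by
    intro f _ hf _
    refine ⟨0, fun T => zero_mem _, fun T _ => rfl, ?_⟩
    rw [map_zero]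
    funext T
    exact (hf T (Nat.zero_le _)).symm

/-- The sequence of states. -/
noncomputable def rseq {d : ℕ} (S : RSt n K d 0) : (i : ℕ) → RSt n K (d + i) i
  | 0 => S
  | i + 1 => (rseq S i).step.choose

lemma gfr_exists (C : Clutter n) (d : ℕ) (hdn : d ≤ n)
    (hK : KEx (fun i : Fin n => (X i ^ 2 : MvPolynomial (Fin n) K))
      (MvPolynomial (Fin n) K ⧸ C.edgeIdeal K) (n - d)) :
    ∃ F : GFR n K (C.coverIdeal K), ∀ (i : ℕ) (j : Fin (F.rk i)), F.tw i j ≤ (d - 1) + i := by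
  let S := rseq (rbase C d hdn hK)
  have hstep : ∀ i, ∃ φ : (Fin (S (i + 1)).r → MvPolynomial (Fin n) K) →ₗ[MvPolynomial (Fin n) K]
      (Fin (S i).r → MvPolynomial (Fin n) K),
      (∀ k, SupV (S i).tw (· = (S (i + 1)).tw k) (φ (Pi.single k 1))) ∧
      LinearMap.range φ = (S i).N ∧ LinearMap.ker φ = (S (i + 1)).N ∧
      (∀ k, (S (i + 1)).tw k ≤ d + i) ∧ ((S i).N = ⊥ → (S (i + 1)).r = 0) :=
    fun i => (S i).step.choose_spec
  choose φ h1 h2 h3 h4 h5 using hstep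
  refine ⟨{ len := n + 1, rk := fun i => (S i).r, rk_zero := ?_, tw := fun i => (S i).tw,
            δ := φ, δ_homog := ?_,
            aug := LinearMap.proj (R := MvPolynomial (Fin n) K)
              (φ := fun _ : Fin 1 => MvPolynomial (Fin n) K) 0,
            aug_homog := ?_, aug_surj := ?_, exact_zero := h2 0, exact_succ := ?_ }, ?_⟩
  · intro i hi
    obtain ⟨i, rfl⟩ : ∃ m', i = m' + 1 := ⟨i - 1, by omega⟩
    exact h5 i ((S i).bot (by omega))
  · intro i k j
    by_cases h0 : φ i (Pi.single k 1) j = 0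
    · exact Or.inl h0
    · right
      have hs : ∀ e, coeff e (φ i (Pi.single k 1) j) ≠ 0 →
          e.degree + (S i).tw j = (S (i + 1)).tw k := fun e he => h1 i k j e he
      obtain ⟨e, he⟩ := MvPolynomial.ne_zero_iff.1 h0
      have := hs e he
      refine ⟨by omega, ?_⟩
      intro e' he'
      have := hs e' he'
      rw [weight_one_degree]
      omega
  · intro j
    have hj : j = (0 : Fin 1) := Subsingleton.elim (α := Fin 1) _ _
    subst hj
    change (Pi.single (M := fun _ : Fin 1 => MvPolynomial (Fin n) K) 0 1 0).IsHomogeneous 0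
    rw [Pi.single_eq_same]
    exact isHomogeneous_one _ _
  · intro r
    refine ⟨fun _ => r, ?_⟩
    change r - r ∈ _
    rw [sub_self]
    exact zero_mem _
  · intro i
    rw [h2, h3]
  · intro i j
    cases i with
    | zero => exact Nat.zero_le _
    | succ i =>
      have := h4 i j
      change (S (i + 1)).tw j ≤ _
      omega

lemma phi_eq' {r : ℕ}
    (φ : (Fin r → MvPolynomial (Fin n) K) →ₗ[MvPolynomial (Fin n) K] MvPolynomial (Fin n) K)
    (w : Fin r → MvPolynomial (Fin n) K) : φ w = ∑ k, w k * φ (Pi.single k 1) := by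
  conv_lhs => rw [pi_eq_sum_univ' w]
  rw [map_sum]
  refine Finset.sum_congr rfl fun k _ => ?_
  rw [map_smul, smul_eq_mul]

lemma gfr_lower (C : Clutter n) (F : GFR n K (C.coverIdeal K)) (r : ℕ)
    (hF : ∀ (i : ℕ) (j : Fin (F.rk i)), F.tw i j ≤ r + i) (S : Finset (Fin n))
    (hS : C.IsMinCover S) : S.card - 1 ≤ r := by
  classical
  by_contra hlt
  obtain ⟨y, hy⟩ := F.aug_surj 1
  set u := 1 - F.aug y with hu
  have hxS : (monomial (fexp S) (1 : K)) ∈ C.coverIdeal K := by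
    rw [← edgeMonomial_eq]
    exact Ideal.subset_span ⟨S, hS.1, rfl⟩
  have h1 : (monomial (fexp S) (1 : K)) • y ∈ Submodule.comap F.aug (C.coverIdeal K) := by
    rw [Submodule.mem_comap, map_smul, smul_eq_mul]
    exact Ideal.mul_mem_right _ _ hxS
  rw [← F.exact_zero] at h1
  obtain ⟨w, hw⟩ := h1
  have h2 : coeff (fexp S) (F.aug ((monomial (fexp S) (1 : K)) • y)) = 1 := by
    have : F.aug y = 1 - u := by rw [hu]; ring
    rw [map_smul, smul_eq_mul, this, mul_sub, mul_one, coeff_sub, coeff_monomial, if_pos rfl,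
      coeff_monomial_mul', if_pos le_rfl, tsub_self, one_mul]
    have hu0 : coeff 0 u = 0 := by
      by_contra h0
      have h3 := (mem_coverIdeal C u).1 hy 0 (mem_support_iff.2 h0)
      have h4 := hS.2 _ h3 (by simp)
      rw [← h4] at hlt
      simp at hlt
    rw [hu0, sub_zero]
  rw [← hw, phi_eq, map_sum, coeff_sum] at h2
  obtain ⟨k, -, hk⟩ := Finset.exists_ne_zero_of_sum_ne_zero (h2.trans_ne one_ne_zero)
  rw [map_smul, smul_eq_mul, coeff_mul] at hk
  obtain ⟨⟨e1, e2⟩, he, hk⟩ := Finset.exists_ne_zero_of_sum_ne_zero hk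
  rw [Finset.HasAntidiagonal.mem_antidiagonal] at he
  have hk2 := right_ne_zero_of_mul hk
  have hmem : F.aug (F.δ 0 (Pi.single k 1)) ∈ C.coverIdeal K := by
    have : F.δ 0 (Pi.single k 1) ∈ LinearMap.range (F.δ 0) := LinearMap.mem_range_self _ _
    rw [F.exact_zero] at this
    exact this
  have hcov := (mem_coverIdeal C _).1 hmem e2 (mem_support_iff.2 hk2)
  have hdeg : e2.degree ≤ r + 1 := by
    rw [phi_eq' F.aug, coeff_sum] at hk2
    obtain ⟨j, -, hj⟩ := Finset.exists_ne_zero_of_sum_ne_zero hk2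
    rw [coeff_mul] at hj
    obtain ⟨⟨a, b⟩, hab, hj⟩ := Finset.exists_ne_zero_of_sum_ne_zero hj
    rw [Finset.HasAntidiagonal.mem_antidiagonal] at hab
    have ha := left_ne_zero_of_mul hj
    have hb := right_ne_zero_of_mul hj
    have hb' := F.aug_homog j hb
    dsimp only at hab hb'
    rw [weight_one_degree] at hb'
    have h5 : e2.degree = a.degree + b.degree := by rw [← hab]; simp
    rcases F.δ_homog 0 k j with h6 | ⟨h6, h7⟩
    · rw [h6] at ha; simp at ha
    · have ha' := h7 ha
      dsimp only at ha'
      rw [weight_one_degree] at ha'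
      have := hF (0 + 1) k
      omega
  have hsub : e2.support ⊆ S := by
    intro i hi
    rw [Finsupp.mem_support_iff] at hi
    have h5 : e1 i + e2 i = fexp S i := by rw [← he]; rfl
    rw [fexp_apply] at h5
    by_contra h6
    rw [if_neg h6] at h5
    omega
  have heq := hS.2 _ hcov hsub
  have hcard : e2.support.card ≤ e2.degree := by
    rw [Finsupp.degree_apply, Finset.card_eq_sum_ones]
    refine Finset.sum_le_sum fun i hi => ?_
    rw [Finsupp.mem_support_iff] at hi
    omega
  rw [heq] at hcard
  omega

lemma alpha_lower (C : Clutter n) (F : GFR n K (C.coverIdeal K)) (r : ℕ)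
    (hF : ∀ (i : ℕ) (j : Fin (F.rk i)), F.tw i j ≤ r + i) : alpha0' C - 1 ≤ r := by
  by_cases hne : { k : ℕ | ∃ S : Finset (Fin n), C.IsMinCover S ∧ S.card = k }.Nonempty
  · obtain ⟨S, hS, hc⟩ := Nat.sSup_mem hne (alpha_bdd C)
    have := gfr_lower C F r hF S hS
    rw [hc] at this
    exact this
  · rw [Set.not_nonempty_iff_eq_empty] at hne
    have : alpha0' C = 0 := by rw [alpha0', hne]; simp
    omega

end Final

/-- For a clutter `C`, `reg(R/I_c(C)) ≥ α₀'(C) - 1`, where `α₀'(C)` is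
the cardinality of a largest minimal vertex cover, with equality if `R/I(C)` is
sequentially Cohen–Macaulay. -/
theorem stmt_12 (K : Type) [Field K] {n : ℕ} (C : Clutter n) :
    alpha0' C - 1 ≤ regR (C.coverIdeal K) ∧
    (IsSeqCM K (C.edgeIdeal K) → regR (C.coverIdeal K) = alpha0' C - 1) := by
  have hlow : alpha0' C - 1 ≤ regR (C.coverIdeal K) := by
    have hne : { r : ℕ | ∃ F : GFR n K (C.coverIdeal K),
        ∀ (i : ℕ) (j : Fin (F.rk i)), F.tw i j ≤ r + i }.Nonempty := by
      refine ⟨n - 1, gfr_exists C n le_rfl ?_⟩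
      rw [Nat.sub_self]
      exact KEx_zero _
    obtain ⟨F, hF⟩ := Nat.sInf_mem hne
    exact alpha_lower C F _ hF
  refine ⟨hlow, fun h => le_antisymm ?_ hlow⟩
  exact Nat.sInf_le (gfr_exists C (alpha0' C) (alpha_le C) (seqCM_KEx C h))
end

section
/- Let G be a bipartite graph without isolated vertices on n vertices, with edge ideal I(G) ⊂ R = K[x_1,...,x_n]. Then depth(R/I(G)) ≤ floor(n/2). -/
open MvPolynomial

/-- The edge ideal of a (simple) graph, in `K[x_v : v ∈ V]`. -/
noncomputable def graphIdeal (K : Type) [Field K] {V : Type} (G : SimpleGraph V) :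
    Ideal (MvPolynomial V K) :=
  Ideal.span { m : MvPolynomial V K | ∃ u v : V, G.Adj u v ∧ m = X u * X v }

/-- A graph is bipartite if its vertex set splits into two parts such that every edge
joins the two parts. -/
def SimpleGraph.IsBipartiteGraph {V : Type} (G : SimpleGraph V) : Prop :=
  ∃ A : Set V, ∀ u v : V, G.Adj u v → (u ∈ A ↔ v ∉ A)

/-- The length of a regular sequence in a prime `m` is bounded by the coheight of every
associated prime contained in `m`. -/
theorem length_le_coheight_aux {R : Type} [CommRing R] [IsNoetherianRing R]
    (m : PrimeSpectrum R) (rs : List R) :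
    ∀ (M : Type) [AddCommGroup M] [Module R M] [Module.Finite R M] (P : PrimeSpectrum R),
      P ≤ m → (∃ x : M, ∀ r, r ∈ P.asIdeal ↔ r • x = 0) → (∀ r ∈ rs, r ∈ m.asIdeal) →
      RingTheory.Sequence.IsWeaklyRegular M rs → (rs.length : ℕ∞) ≤ Order.coheight P := by
  induction rs with
  | nil => intros; simp
  | cons r rs ih =>
    intro M _ _ _ P hPm hx hrs hreg
    obtain ⟨x, hx⟩ := hx
    rw [RingTheory.Sequence.isWeaklyRegular_cons_iff] at hreg
    obtain ⟨hr, hreg⟩ := hreg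
    have hrm : r ∈ m.asIdeal := hrs r (by simp)
    have hrP : r ∉ P.asIdeal := by
      intro h
      have h0 : x = 0 := hr.right_eq_zero_of_smul ((hx r).1 h)
      exact P.2.ne_top ((Ideal.eq_top_iff_one _).2 ((hx 1).2 (by simp [h0])))
    let N : Submodule R M := Submodule.torsionBySet R M (P.asIdeal : Set R)
    have hxN : x ∈ N := by
      rw [Submodule.mem_torsionBySet_iff]
      rintro ⟨a, ha⟩
      exact (hx a).1 ha
    have hm : m ∈ Module.support R N := by
      rw [Module.mem_support_iff_of_finite]
      intro a ha
      apply hPm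
      rw [Module.mem_annihilator] at ha
      exact (hx a).2 (by simpa using congrArg Subtype.val (ha ⟨x, hxN⟩))
    have hm' : m ∈ Module.support R (QuotSMulTop r N) := by
      rw [Module.support_quotSMulTop]
      exact ⟨hm, by simpa [PrimeSpectrum.mem_zeroLocus] using hrm⟩
    rw [Module.mem_support_iff_of_finite] at hm'
    obtain ⟨Q, hQ, hQm⟩ := Ideal.exists_minimalPrimes_le hm'
    have hQprime : Q.IsPrime := hQ.1.1
    have hQa := Module.associatedPrimes.minimalPrimes_annihilator_subset_associatedPrimes R _ hQ
    have hinj : Function.Injective (QuotSMulTop.map r N.subtype) := by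
      rw [injective_iff_map_eq_zero]
      intro y hy
      obtain ⟨y, rfl⟩ := Submodule.Quotient.mk_surjective _ y
      erw [QuotSMulTop.map_apply_mk, Submodule.Quotient.mk_eq_zero] at hy
      rw [Submodule.Quotient.mk_eq_zero]
      rw [Submodule.mem_smul_pointwise_iff_exists] at hy ⊢
      obtain ⟨z, -, hz⟩ := hy
      refine ⟨⟨z, ?_⟩, trivial, Subtype.ext hz⟩
      rw [Submodule.mem_torsionBySet_iff]
      rintro ⟨a, ha⟩
      apply hr.right_eq_zero_of_smul
      have := (Submodule.mem_torsionBySet_iff _ _).1 y.2 ⟨a, ha⟩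
      simp only [Submodule.subtype_apply] at hz
      rw [← hz] at this
      rw [smul_comm]
      exact this
    have hQM := associatedPrimes.subset_of_injective hinj hQa
    have hlt : P < (⟨Q, hQprime⟩ : PrimeSpectrum R) := by
      refine lt_of_le_of_ne ?_ ?_
      · intro a ha
        refine hQ.1.2 ?_
        rw [Module.mem_annihilator]
        intro y
        obtain ⟨y, rfl⟩ := Submodule.Quotient.mk_surjective _ y
        rw [← Submodule.Quotient.mk_smul]
        have : a • y = 0 :=
          Subtype.ext ((Submodule.mem_torsionBySet_iff _ _).1 y.2 ⟨a, ha⟩)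
        rw [this]; rfl
      · intro h
        apply hrP
        rw [h]
        exact hQ.1.2 (QuotSMulTop.mem_annihilator _ r)
    obtain ⟨-, z, hz⟩ := Submodule.isAssociatedPrime_iff.1 hQM
    have := ih (QuotSMulTop r M) ⟨Q, hQprime⟩ hQm
      ⟨z, fun a => by change a ∈ Q ↔ _; rw [hz]; simp [Submodule.mem_colon_singleton]⟩
      (fun a ha => hrs a (by simp [ha])) hreg
    calc ((r :: rs).length : ℕ∞) = rs.length + 1 := by simp
      _ ≤ Order.coheight (⟨Q, hQprime⟩ : PrimeSpectrum R) + 1 := by gcongr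
      _ ≤ _ := Order.coheight_add_one_le hlt

theorem mul_mem_of_mem_span_aux {R : Type} [CommRing R] (S : Set R) (I : Ideal R) (f : R)
    (h : ∀ s ∈ S, s * f ∈ I) (g : R) (hg : g ∈ Ideal.span S) : g * f ∈ I := by
  induction hg using Submodule.span_induction with
  | mem x hx => exact h x hx
  | zero => simp
  | add x y _ _ hx hy => rw [add_mul]; exact I.add_mem hx hy
  | smul a x _ hx => rw [smul_eq_mul, mul_assoc]; exact I.mul_mem_left _ hx

theorem coheight_ker_aux {R S : Type} [CommRing R] [CommRing S] (f : R →+* S)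
    (hf : Function.Surjective f) (P : PrimeSpectrum R) (hP : P.asIdeal = RingHom.ker f) :
    ((Order.coheight P : ℕ∞) : WithBot ℕ∞) = ringKrullDim S := by
  rw [← ringKrullDim_eq_of_ringEquiv (RingHom.quotientKerEquivOfSurjective hf),
    ringKrullDim_quotient, Order.coheight_eq_krullDim_Ici, ← hP]
  rfl

theorem length_le_ringKrullDim_aux {R S : Type} [CommRing R] [IsNoetherianRing R]
    [CommRing S] [IsDomain S] (φ : R →+* S) (hφ : Function.Surjective φ) (I m : Ideal R)
    (hm : m.IsPrime) (f : R) (hPm : RingHom.ker φ ≤ m) (hIP : I ≤ RingHom.ker φ)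
    (hf : φ f ≠ 0) (hPf : ∀ g ∈ RingHom.ker φ, g * f ∈ I) (rs : List R)
    (hrs : ∀ r ∈ rs, r ∈ m) (hreg : RingTheory.Sequence.IsWeaklyRegular (R ⧸ I) rs) :
    ((rs.length : ℕ∞) : WithBot ℕ∞) ≤ ringKrullDim S := by
  have hP : (RingHom.ker φ).IsPrime := RingHom.ker_isPrime _
  rw [← coheight_ker_aux φ hφ ⟨RingHom.ker φ, hP⟩ rfl]
  refine WithBot.coe_le_coe.2 (length_le_coheight_aux ⟨m, hm⟩ rs (R ⧸ I) ⟨RingHom.ker φ, hP⟩ hPm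
    ⟨Ideal.Quotient.mk _ f, fun g => ?_⟩ hrs hreg)
  rw [Algebra.smul_def, Ideal.Quotient.algebraMap_eq, ← map_mul, Ideal.Quotient.eq_zero_iff_mem]
  exact ⟨hPf g, fun h => (hP.mem_or_mem (hIP h)).resolve_right hf⟩

theorem length_le_card (K : Type) [Field K] {n : ℕ} (G : SimpleGraph (Fin n))
    (hniso : ∀ v : Fin n, ∃ u : Fin n, G.Adj v u)
    (A : Set (Fin n)) (hA : ∀ u v, G.Adj u v → (u ∈ A ↔ v ∉ A))
    (rs : List (MvPolynomial (Fin n) K)) (hrs : ∀ r ∈ rs, r ∈ maxIdeal n K)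
    (hreg : RingTheory.Sequence.IsWeaklyRegular (MvPolynomial (Fin n) K ⧸ graphIdeal K G) rs) :
    rs.length ≤ Nat.card A := by
  classical
  let φ : MvPolynomial (Fin n) K →ₐ[K] MvPolynomial A K :=
    aeval (fun i => if h : i ∈ A then X ⟨i, h⟩ else 0)
  have hφ1 : ∀ i (h : i ∈ A), φ (X i) = X ⟨i, h⟩ := fun i h => by simp [φ, h]
  have hφ0 : ∀ i, i ∉ A → φ (X i) = 0 := fun i h => by simp [φ, h]
  clear_value φ
  have hPmem : ∀ g, g ∈ RingHom.ker φ.toRingHom ↔ φ g = 0 := fun g => Iff.rfl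
  have hmmem : ∀ g, g ∈ RingHom.ker (constantCoeff (σ := Fin n) (R := K)) ↔
    constantCoeff g = 0 := fun g => Iff.rfl
  let J : Ideal (MvPolynomial (Fin n) K) := Ideal.span ((fun i => X i) '' Aᶜ)
  have hPJ : RingHom.ker φ.toRingHom ≤ J := by
    intro g hg
    have hcomp : ((Ideal.Quotient.mkₐ K J).comp ((rename (R := K) (Subtype.val : A → Fin n)).comp φ))
        = Ideal.Quotient.mkₐ K J := by
      apply MvPolynomial.algHom_ext
      intro i
      by_cases hi : i ∈ A
      · simp [hφ1 i hi]
      · have : (X i : MvPolynomial (Fin n) K) ∈ J := Ideal.subset_span ⟨i, hi, rfl⟩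
        simp only [AlgHom.comp_apply, hφ0 i hi, map_zero]
        exact (Ideal.Quotient.eq_zero_iff_mem.2 this).symm
    have h2 := DFunLike.congr_fun hcomp g
    simp only [AlgHom.comp_apply, (hPmem g).1 hg, map_zero] at h2
    exact Ideal.Quotient.eq_zero_iff_mem.1 h2.symm
  have hPm : RingHom.ker φ.toRingHom ≤ RingHom.ker (constantCoeff (σ := Fin n) (R := K)) := by
    refine le_trans (b := J) hPJ (Ideal.span_le.2 ?_)
    rintro _ ⟨i, -, rfl⟩
    exact (hmmem _).2 (by simp)
  have hmax : maxIdeal n K ≤ RingHom.ker (constantCoeff (σ := Fin n) (R := K)) := by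
    refine Ideal.span_le.2 ?_
    rintro _ ⟨i, rfl⟩
    exact (hmmem _).2 (by simp)
  have hIP : graphIdeal K G ≤ RingHom.ker φ.toRingHom := by
    refine Ideal.span_le.2 ?_
    rintro _ ⟨u, v, huv, rfl⟩
    refine (hPmem _).2 ?_
    have := hA u v huv
    by_cases hu : u ∈ A
    · rw [map_mul, hφ0 v (this.1 hu), mul_zero]
    · rw [map_mul, hφ0 u hu, zero_mul]
  obtain ⟨f, hf, hd⟩ : ∃ f : MvPolynomial (Fin n) K, f ∉ RingHom.ker φ.toRingHom ∧
      ∀ u ∈ A, (X u : MvPolynomial (Fin n) K) ∣ f := by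
    refine ⟨∏ i ∈ A.toFinset, X i, ?_, fun u hu => ?_⟩
    · rw [hPmem, map_prod, Finset.prod_eq_zero_iff]
      rintro ⟨i, hiA, hi⟩
      rw [hφ1 i (Set.mem_toFinset.1 hiA)] at hi
      exact X_ne_zero _ hi
    · exact Finset.dvd_prod_of_mem _ (Set.mem_toFinset.2 hu)
  have hJf : ∀ g ∈ J, g * f ∈ graphIdeal K G := by
    intro g hg
    refine mul_mem_of_mem_span_aux _ _ f ?_ g hg
    rintro _ ⟨i, hi, rfl⟩
    obtain ⟨u, hu⟩ := hniso i
    have huA : u ∈ A := by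
      by_contra h
      exact hi ((hA i u hu).2 h)
    obtain ⟨c, hc⟩ := hd u huA
    rw [hc, ← mul_assoc]
    exact Ideal.mul_mem_right _ _ (Ideal.subset_span ⟨i, u, hu, rfl⟩)
  have hsurj : Function.Surjective φ := by
    intro g
    refine ⟨rename Subtype.val g, ?_⟩
    have : φ.comp (rename Subtype.val) = AlgHom.id K (MvPolynomial A K) := by
      apply MvPolynomial.algHom_ext
      intro i
      simp [hφ1 i i.2]
    exact DFunLike.congr_fun this g
  have := length_le_ringKrullDim_aux φ.toRingHom hsurj (graphIdeal K G)
    (RingHom.ker (constantCoeff (σ := Fin n) (R := K))) (RingHom.ker_isPrime _) f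
    hPm hIP hf (fun g hg => hJf g (hPJ hg)) rs (fun r hr => hmax (hrs r hr)) hreg
  rw [MvPolynomial.ringKrullDim_of_isNoetherianRing, ringKrullDim_eq_zero_of_field,
    zero_add] at this
  exact_mod_cast this

/-- If `G` is a bipartite graph on `n` vertices without isolated
vertices, then `depth R/I(G) ≤ ⌊n/2⌋`. -/
theorem stmt_15 (K : Type) [Field K] {n : ℕ} (G : SimpleGraph (Fin n))
    (hbip : G.IsBipartiteGraph) (hniso : ∀ v : Fin n, ∃ u : Fin n, G.Adj v u) :
    depthR n K (MvPolynomial (Fin n) K ⧸ graphIdeal K G) ≤ n / 2 := by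
  obtain ⟨A, hA⟩ := hbip
  refine csSup_le' ?_
  rintro k ⟨rs, rfl, hrs, hreg⟩
  have h1 := length_le_card K G hniso A hA rs hrs hreg.toIsWeaklyRegular
  have h2 := length_le_card K G hniso Aᶜ (fun u v h => by
    have := hA u v h
    simp only [Set.mem_compl_iff]; tauto) rs hrs hreg.toIsWeaklyRegular
  have h3 := Set.ncard_add_ncard_compl A
  rw [Nat.card_eq_fintype_card, Fintype.card_fin] at h3
  rw [Nat.card_coe_set_eq] at h1 h2
  omega
end

section
/- Let G be a cycle of odd length n = 2k+1 and let I = I(G) be its edge ideal in R = K[x_1,...,x_n]. Then Ass(R/I^t) = Min(R/I) for t ≤ k, and Ass(R/I^t) = Min(R/I) ∪ {m} for t ≥ k+1, where m = (x_1,...,x_n) is the maximal graded ideal. Moreover, for t ≥ k+1 one has m = (I^t : c) for a monomial c of degree 2t-1. -/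
open MvPolynomial

/-- The cycle graph of length `n` on the vertex set `ZMod n`:
`i` is adjacent to `i ± 1`. -/
def cycleGraph (n : ℕ) : SimpleGraph (ZMod n) :=
  SimpleGraph.fromRel (fun i j => j = i + 1)

section Comb
open Finset

lemma val_succ_aux (n : ℕ) [NeZero n] (hn : 2 ≤ n) (i : ZMod n) :
    ((i + 1).val = i.val + 1 ∧ i.val + 1 < n) ∨ (i + 1 = 0 ∧ i.val + 1 = n) := by
  have hlt := ZMod.val_lt i
  have : Fact (1 < n) := ⟨by omega⟩
  by_cases h : i.val + 1 < n
  · left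
    refine ⟨?_, h⟩
    rw [ZMod.val_add_of_lt]
    · rw [ZMod.val_one]
    · rw [ZMod.val_one]; exact h
  · right
    have h2 : i.val + 1 = n := by omega
    refine ⟨?_, h2⟩
    have : ((i.val + 1 : ℕ) : ZMod n) = 0 := by rw [h2]; simp
    simpa using this

lemma sum_zmod_range (n : ℕ) [NeZero n] (g : ℕ → ℕ) :
    ∑ i : ZMod n, g i.val = ∑ m ∈ range n, g m := by
  refine Finset.sum_bij' (fun i _ => i.val) (fun m _ => (m : ZMod n)) ?_ ?_ ?_ ?_ ?_
  · intro i _; simpa using ZMod.val_lt i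
  · simp
  · intro i _; simp
  · intro m hm; exact ZMod.val_cast_of_lt (by simpa using hm)
  · simp

/-- Rounding a half-integral b-matching of a cycle. -/
lemma rounding (n : ℕ) [NeZero n] (hn : 2 ≤ n) (a z : ZMod n → ℕ) (t : ℕ)
    (hz : ∀ i, z i + z (i + 1) ≤ 2 * a (i + 1)) (hs : 2 * t ≤ ∑ i, z i) :
    ∃ w : ZMod n → ℕ, (∀ i, w i + w (i + 1) ≤ a (i + 1)) ∧ t ≤ ∑ i, w i := by
  classical
  let S : ℕ → ℕ := fun m => ∑ j ∈ range m, z (j : ZMod n)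
  have hS0 : S 0 = 0 := by simp [S]
  have hS1 : ∀ m, S (m + 1) = S m + z (m : ZMod n) := fun m => by simp [S, sum_range_succ]
  have hSn : S n = ∑ i, z i := by
    have := sum_zmod_range n (fun m => z (m : ZMod n))
    simp only [S, ← this]
    simp
  have hSi : ∀ i : ZMod n, S (i.val + 1) = S i.val + z i := fun i => by rw [hS1]; simp
  let e : ℕ := if Even (S n) then 1 else 0
  let T : ℕ → ℕ := fun m => (S m + e) / 2
  have hTmono : Monotone T := by
    refine monotone_nat_of_le_succ fun m => ?_
    simp only [T, hS1]; omega
  refine ⟨fun i => T (i.val + 1) - T i.val, ?_, ?_⟩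
  · intro i
    have h1 := hz i
    have h2 := hSi i
    have h3 := hSi (i + 1)
    beta_reduce
    rcases val_succ_aux n hn i with ⟨h, _⟩ | ⟨h, hv⟩
    · rw [h] at h3 ⊢
      simp only [T]
      have : e ≤ 1 := by simp only [e]; split_ifs <;> omega
      omega
    · have h0 : (i + 1).val = 0 := by rw [h]; simp
      rw [h0] at h3 ⊢
      rw [hv] at h2 ⊢
      simp only [T]
      rw [hS0] at h3 ⊢
      by_cases hE : Even (S n)
      · have : e = 1 := by simp [e, hE]
        rw [this]
        obtain ⟨r, hr⟩ := hE
        omega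
      · have : e = 0 := by simp [e, hE]
        rw [this]
        have := Nat.not_even_iff.1 hE
        omega
  · rw [sum_zmod_range n (fun m => T (m + 1) - T m), Finset.sum_range_tsub hTmono]
    simp only [T, hS0]
    by_cases hE : Even (S n)
    · have : e = 1 := by simp [e, hE]
      rw [this]; omega
    · have : e = 0 := by simp [e, hE]
      rw [this]; omega

/-- vertex covers of the cycle -/
def IsCov {n : ℕ} (C : Finset (ZMod n)) : Prop := ∀ i, i ∈ C ∨ i + 1 ∈ C

lemma hall_cond (n : ℕ) [NeZero n] (hn : 2 ≤ n) (a : ZMod n → ℕ) (t : ℕ)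
    (hC : ∀ C : Finset (ZMod n), IsCov C → t ≤ ∑ i ∈ C, a i) (ha : 2 * t ≤ ∑ i, a i)
    (S : Finset (ZMod n)) :
    2 * t ≤ ∑ i with (i + 1 ∈ S ∨ i - 1 ∈ S), a i + ∑ i with i ∉ S, a i := by
  classical
  by_cases hB : ∃ v, v ∈ S ∧ v + 1 ∉ S ∧ v - 1 ∉ S
  · obtain ⟨v, hvS, hv1, hv2⟩ := hB
    let N : ZMod n → Prop := fun i => i + 1 ∈ S ∨ i - 1 ∈ S
    let C : ℕ → Finset (ZMod n) := fun r => univ.filter fun i =>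
      (N i ∧ i ∉ S) ∨ ((N i ↔ i ∈ S) ∧ (i - v).val % 2 = r)
    have hcov : ∀ r < 2, IsCov (C r) := by
      intro r hr i
      simp only [C, mem_filter, mem_univ, true_and]
      have hN1 : i ∈ S → N (i + 1) := fun h => Or.inr (by simpa using h)
      have hN2 : i + 1 ∈ S → N i := fun h => Or.inl h
      have hN3 : i ∈ S → i + 1 ∈ S → N i ∧ N (i + 1) := fun h h' => ⟨Or.inl h', Or.inr (by simpa using h)⟩
      by_cases hi : i = v
      · subst hi
        right; left; exact ⟨hN1 hvS, hv1⟩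
      by_cases hi' : i + 1 = v
      · left; left
        refine ⟨hN2 (hi' ▸ hvS), ?_⟩
        have : i = v - 1 := by rw [← hi']; ring
        rw [this]; exact hv2
      have hpar : (i + 1 - v).val = (i - v).val + 1 := by
        have e : i + 1 - v = (i - v) + 1 := by ring
        rcases val_succ_aux n hn (i - v) with ⟨h, _⟩ | ⟨h, _⟩
        · rw [e, h]
        · exfalso; apply hi'
          rw [← e] at h
          exact sub_eq_zero.1 h
      have hN4 : N i → i ∈ S ∨ i + 1 ∈ S ∨ i - 1 ∈ S := by
        rintro (h | h) <;> tauto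
      rw [hpar]
      have hp : (i - v).val % 2 = r ∨ ((i - v).val + 1) % 2 = r := by omega
      by_cases c1 : i ∈ S <;> by_cases c2 : i + 1 ∈ S <;> by_cases c3 : N i <;>
        by_cases c4 : N (i + 1) <;> simp_all
    have h0 := hC _ (hcov 0 (by omega))
    have h1 := hC _ (hcov 1 (by omega))
    have : ∑ i ∈ C 0, a i + ∑ i ∈ C 1, a i =
        ∑ i with (i + 1 ∈ S ∨ i - 1 ∈ S), a i + ∑ i with i ∉ S, a i := by
      simp only [C, sum_filter, ← sum_add_distrib]
      refine sum_congr rfl fun i _ => ?_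
      change _ = (if N i then a i else 0) + _
      have hp : (i - v).val % 2 = 0 ∨ (i - v).val % 2 = 1 := by omega
      by_cases c1 : i ∈ S <;> by_cases c3 : N i <;> rcases hp with hp | hp <;> simp [c1, c3, hp]
    omega
  · push Not at hB
    refine ha.trans ?_
    rw [← sum_filter_add_sum_filter_not univ (fun i => i ∉ S), add_comm]
    gcongr with i _
    intro hi
    have := hB i (not_not.1 hi)
    tauto

/-- blown-up vertices -/
abbrev BV {n : ℕ} (a : ZMod n → ℕ) : Type := Σ i : ZMod n, Fin (a i)

lemma frac_matching (n : ℕ) [NeZero n] (hn : 3 ≤ n) (a : ZMod n → ℕ) (t : ℕ)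
    (hC : ∀ C : Finset (ZMod n), IsCov C → t ≤ ∑ i ∈ C, a i) (ha : 2 * t ≤ ∑ i, a i) :
    ∃ z : ZMod n → ℕ, (∀ i, z i + z (i + 1) ≤ 2 * a (i + 1)) ∧ 2 * t ≤ ∑ i, z i := by
  classical
  obtain ⟨D, hD⟩ := Nat.exists_eq_add_of_le ha
  let nb : BV a → Finset ((BV a) ⊕ Fin D) := fun x =>
    (univ.filter fun y : BV a => y.1 = x.1 + 1 ∨ y.1 = x.1 - 1).disjSum univ
  have hcount : ∀ (p : ZMod n → Prop) [DecidablePred p], #{x : BV a | p x.1} = ∑ i with p i, a i := by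
    intro p _
    have : ({x : BV a | p x.1} : Finset (BV a)) = (univ.filter p).sigma (fun i => univ) := by
      ext x; simp
    rw [this, card_sigma]; simp
  have hall : ∀ s : Finset (BV a), #s ≤ #(s.biUnion nb) := by
    intro s
    rcases s.eq_empty_or_nonempty with rfl | ⟨x0, hx0⟩
    · simp
    let S : Finset (ZMod n) := s.image Sigma.fst
    have h1 : #s ≤ ∑ i with i ∈ S, a i := by
      rw [← hcount (fun i => i ∈ S)]
      refine card_le_card fun x hx => ?_
      simp only [mem_filter, mem_univ, true_and, S]
      exact mem_image_of_mem _ hx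
    have h2 : ∑ i with (i + 1 ∈ S ∨ i - 1 ∈ S), a i + D ≤ #(s.biUnion nb) := by
      rw [← hcount (fun i => i + 1 ∈ S ∨ i - 1 ∈ S)]
      have hDc : #(univ : Finset (Fin D)) = D := by simp
      refine le_trans (b := #(({x : BV a | x.1 + 1 ∈ S ∨ x.1 - 1 ∈ S} : Finset (BV a)).disjSum
        (univ : Finset (Fin D)))) (by rw [card_disjSum, hDc]) ?_
      refine card_le_card fun y hy => ?_
      rw [mem_biUnion]
      rcases y with y | y
      · simp only [inl_mem_disjSum, mem_filter, mem_univ, true_and, S, mem_image] at hy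
        rcases hy with ⟨x, hx, h⟩ | ⟨x, hx, h⟩
        · exact ⟨x, hx, by simp [nb, h]⟩
        · exact ⟨x, hx, by simp [nb, h]⟩
      · exact ⟨x0, hx0, by simp [nb]⟩
    have h3 := hall_cond n (by omega) a t hC ha S
    have h4 := sum_filter_add_sum_filter_not univ (fun i => i ∈ S) a
    omega
  obtain ⟨f, hf, hfn⟩ := (Finset.all_card_le_biUnion_card_iff_exists_injective nb).1 hall
  let E : ZMod n → ZMod n → Finset (BV a) := fun i j =>
    univ.filter fun x => x.1 = i ∧ ∃ y : BV a, f x = Sum.inl y ∧ y.1 = j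
  have hE1 : ∀ i j k, j ≠ k → #(E i j) + #(E i k) ≤ a i := by
    intro i j k hjk
    have hd : Disjoint (E i j) (E i k) := by
      rw [disjoint_left]
      intro x hx hx'
      simp only [E, mem_filter, mem_univ, true_and] at hx hx'
      obtain ⟨_, y, hy, hj⟩ := hx
      obtain ⟨_, y', hy', hk⟩ := hx'
      rw [hy] at hy'
      have := Sum.inl.inj hy'
      subst this
      exact hjk (hj.symm.trans hk)
    rw [← card_union_of_disjoint hd]
    have : a i = #{x : BV a | x.1 = i} := by rw [hcount (fun j => j = i), sum_filter]; simp
    rw [this]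
    refine card_le_card fun x hx => ?_
    simp only [E, mem_union, mem_filter, mem_univ, true_and] at hx ⊢
    tauto
  have hE2 : ∀ i j k, j ≠ k → #(E j i) + #(E k i) ≤ a i := by
    intro i j k hjk
    have hd : Disjoint (E j i) (E k i) := by
      rw [disjoint_left]
      intro x hx hx'
      simp only [E, mem_filter, mem_univ, true_and] at hx hx'
      exact hjk (hx.1.symm.trans hx'.1)
    rw [← card_union_of_disjoint hd]
    have : a i = #(({x : BV a | x.1 = i} : Finset (BV a)).image (Sum.inl : BV a → (BV a) ⊕ Fin D)) := by
      rw [card_image_of_injective _ Sum.inl_injective, hcount (fun j => j = i), sum_filter]; simp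
    rw [this, ← card_image_of_injective _ hf]
    refine card_le_card fun y hy => ?_
    simp only [E, mem_image, mem_union, mem_filter, mem_univ, true_and] at hy ⊢
    obtain ⟨x, hx, rfl⟩ := hy
    rcases hx with ⟨_, y, hy, h⟩ | ⟨_, y, hy, h⟩
    · exact ⟨y, h, hy.symm⟩
    · exact ⟨y, h, hy.symm⟩
  refine ⟨fun i => #(E i (i + 1)) + #(E (i + 1) i), ?_, ?_⟩
  · intro i
    have hne : i ≠ i + 1 + 1 := by
      intro h
      have h2 : ((2 : ℕ) : ZMod n) = 0 := by
        push_cast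
        linear_combination -h
      rw [ZMod.natCast_eq_zero_iff] at h2
      have := Nat.le_of_dvd (by omega) h2
      omega
    have := hE1 (i + 1) i (i + 1 + 1) hne
    have := hE2 (i + 1) i (i + 1 + 1) hne
    simp only
    omega
  · have h1 : (univ : Finset (BV a)).image f ⊆
        ((univ : Finset (ZMod n)).biUnion fun i => E i (i + 1) ∪ E (i + 1) i).image f ∪
          (univ : Finset (Fin D)).image Sum.inr := by
      intro y hy
      simp only [mem_image, mem_univ, true_and] at hy
      obtain ⟨x, rfl⟩ := hy
      have hx := hfn x
      rw [mem_union]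
      rcases hfx : f x with y | y
      · left
        rw [← hfx]
        refine mem_image_of_mem _ ?_
        rw [mem_biUnion]
        rw [hfx] at hx
        simp only [nb, inl_mem_disjSum, mem_filter, mem_univ, true_and] at hx
        rcases hx with h | h
        · exact ⟨x.1, mem_univ _, mem_union_left _ (mem_filter.2 ⟨mem_univ _, rfl, y, hfx, h⟩)⟩
        · refine ⟨y.1, mem_univ _, ?_⟩
          have : x.1 = y.1 + 1 := by rw [h]; ring
          exact mem_union_right _ (mem_filter.2 ⟨mem_univ _, this, y, hfx, rfl⟩)
      · right; simp
    have h2 := card_le_card h1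
    rw [card_image_of_injective _ hf] at h2
    have h3 : #(univ : Finset (BV a)) = ∑ i, a i := by
      have := hcount (fun _ => True)
      simpa using this
    have h4 := card_union_le (((univ : Finset (ZMod n)).biUnion fun i => E i (i + 1) ∪ E (i + 1) i).image f)
      ((univ : Finset (Fin D)).image (Sum.inr : Fin D → (BV a) ⊕ Fin D))
    rw [card_image_of_injective _ hf, card_image_of_injective _ Sum.inr_injective] at h4
    have h5 : #((univ : Finset (ZMod n)).biUnion fun i => E i (i + 1) ∪ E (i + 1) i) ≤
        ∑ i, (#(E i (i + 1)) + #(E (i + 1) i)) :=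
      card_biUnion_le.trans (sum_le_sum fun i _ => card_union_le _ _)
    simp only [card_univ, Fintype.card_fin] at h4 h3 h2
    beta_reduce
    omega

theorem comb (n : ℕ) [NeZero n] (hn : 3 ≤ n) (a : ZMod n → ℕ) (t : ℕ)
    (hC : ∀ C : Finset (ZMod n), IsCov C → t ≤ ∑ i ∈ C, a i) (ha : 2 * t ≤ ∑ i, a i) :
    ∃ w : ZMod n → ℕ, (∀ i, w i + w (i + 1) ≤ a (i + 1)) ∧ t ≤ ∑ i, w i := by
  obtain ⟨z, hz, hs⟩ := frac_matching n hn a t hC ha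
  exact rounding n (by omega) a z t hz hs

/-- alternating sets on the odd cycle starting at `v` -/
lemma alt_cov (k : ℕ) (hk : 1 ≤ k) (v : ZMod (2 * k + 1)) (r : ℕ) (hr : r < 2) :
    IsCov (univ.filter fun i : ZMod (2 * k + 1) => i = v ∨ (i - v).val % 2 = r) := by
  intro i
  simp only [mem_filter, mem_univ, true_and]
  have e : i + 1 - v = (i - v) + 1 := by ring
  rcases val_succ_aux (2 * k + 1) (by omega) (i - v) with ⟨h, _⟩ | ⟨h, _⟩
  · rw [e, h]; omega
  · right; left
    rw [← e] at h
    exact sub_eq_zero.1 h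

theorem small_deg (k : ℕ) (hk : 1 ≤ k) (a : ZMod (2 * k + 1) → ℕ) (t : ℕ) (ht : t ≤ k)
    (hC : ∀ C : Finset (ZMod (2 * k + 1)), IsCov C → t ≤ ∑ i ∈ C, a i) : 2 * t ≤ ∑ i, a i := by
  by_cases h : ∃ v, a v = 0
  · obtain ⟨v, hv⟩ := h
    have h0 := hC _ (alt_cov k hk v 0 (by omega))
    have h1 := hC _ (alt_cov k hk v 1 (by omega))
    have : ∑ i, a i = ∑ i with (i = v ∨ (i - v).val % 2 = 0), a i
        + ∑ i with (i = v ∨ (i - v).val % 2 = 1), a i := by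
      simp only [sum_filter, ← sum_add_distrib]
      refine sum_congr rfl fun i _ => ?_
      by_cases c : i = v
      · subst c; simp [hv]
      · have hp : (i - v).val % 2 = 0 ∨ (i - v).val % 2 = 1 := by omega
        rcases hp with hp | hp <;> simp [c, hp]
    omega
  · push Not at h
    have : ∑ i : ZMod (2 * k + 1), 1 ≤ ∑ i, a i := sum_le_sum fun i _ => Nat.one_le_iff_ne_zero.2 (h i)
    simp only [sum_const, card_univ, ZMod.card, smul_eq_mul, mul_one] at this
    omega

end Comb


/-- Ideal of polynomials all of whose monomials have `w`-weight at least `s`. -/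
noncomputable def ordIdeal (K : Type) [Field K] {V : Type} (w : V → ℕ) (s : ℕ) :
    Ideal (MvPolynomial V K) where
  carrier := {f | (s : ℕ∞) ≤ (f : MvPowerSeries V K).weightedOrder w}
  add_mem' {f g} hf hg := by
    simp only [Set.mem_ofPred_eq, MvPolynomial.coe_add] at *
    exact (le_min hf hg).trans (MvPowerSeries.min_weightedOrder_le_add w)
  zero_mem' := by simp
  smul_mem' c f hf := by
    simp only [Set.mem_ofPred_eq, smul_eq_mul, MvPolynomial.coe_mul,
      MvPowerSeries.weightedOrder_mul] at *
    exact hf.trans le_add_self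

lemma mem_ordIdeal {K : Type} [Field K] {V : Type} {w : V → ℕ} {s : ℕ} {f : MvPolynomial V K} :
    f ∈ ordIdeal K w s ↔ (s : ℕ∞) ≤ (f : MvPowerSeries V K).weightedOrder w := Iff.rfl

lemma mem_ordIdeal_iff {K : Type} [Field K] {V : Type} {w : V → ℕ} {s : ℕ} {f : MvPolynomial V K} :
    f ∈ ordIdeal K w s ↔ ∀ d ∈ f.support, s ≤ Finsupp.weight w d := by
  rw [mem_ordIdeal]
  constructor
  · intro h d hd
    have h1 : MvPowerSeries.coeff d (f : MvPowerSeries V K) ≠ 0 := by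
      rw [MvPolynomial.coeff_coe]; exact mem_support_iff.1 hd
    have := h.trans (MvPowerSeries.weightedOrder_le w h1)
    exact_mod_cast this
  · intro h
    refine MvPowerSeries.nat_le_weightedOrder w fun d hd => ?_
    rw [MvPolynomial.coeff_coe]
    by_contra hne
    have := h d (mem_support_iff.2 hne)
    omega

lemma ordIdeal_pow_le {K : Type} [Field K] {V : Type} (w : V → ℕ) (s t : ℕ) :
    (ordIdeal K w s) ^ t ≤ ordIdeal K w (t * s) := by
  induction t with
  | zero => intro f _; rw [mem_ordIdeal]; simp
  | succ t ih =>
    rw [pow_succ, Ideal.mul_le]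
    intro f hf g hg
    have h1 := mem_ordIdeal.1 (ih hf)
    have h2 := mem_ordIdeal.1 hg
    rw [mem_ordIdeal, MvPolynomial.coe_mul, MvPowerSeries.weightedOrder_mul, add_mul, one_mul,
      Nat.cast_add]
    exact add_le_add h1 h2

/-- indicator weight -/
def ind {n : ℕ} (C : Finset (ZMod n)) : ZMod n → ℕ := fun i => if i ∈ C then 1 else 0

lemma weight_ind {n : ℕ} [NeZero n] (C : Finset (ZMod n)) (d : ZMod n →₀ ℕ) :
    Finsupp.weight (ind C) d = ∑ i ∈ C, d i := by
  rw [Finsupp.weight_apply, Finsupp.sum_fintype _ _ (by simp)]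
  simp [ind]

section
variable {K : Type} [Field K] {n : ℕ}

lemma adj_succ (hn : 3 ≤ n) (i : ZMod n) : (cycleGraph n).Adj i (i + 1) := by
  have : Fact (1 < n) := ⟨by omega⟩
  rw [cycleGraph, SimpleGraph.fromRel_adj]
  refine ⟨?_, Or.inl rfl⟩
  intro h
  have : (1 : ZMod n) = 0 := by linear_combination -h
  exact one_ne_zero this

lemma edge_mem (hn : 3 ≤ n) (i : ZMod n) :
    (X i * X (i + 1) : MvPolynomial (ZMod n) K) ∈ graphIdeal K (cycleGraph n) :=
  Ideal.subset_span ⟨i, i + 1, adj_succ hn i, rfl⟩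

lemma graphIdeal_le (J : Ideal (MvPolynomial (ZMod n) K))
    (h : ∀ i : ZMod n, X i * X (i + 1) ∈ J) : graphIdeal K (cycleGraph n) ≤ J := by
  rw [graphIdeal, Ideal.span_le]
  rintro _ ⟨u, v, huv, rfl⟩
  rw [cycleGraph, SimpleGraph.fromRel_adj] at huv
  rcases huv with ⟨_, h' | h'⟩
  · rw [h']; exact h u
  · rw [h', mul_comm]; exact h v

lemma edge_ord [NeZero n] (C : Finset (ZMod n)) (s : ℕ)
    (h : ∀ i, s ≤ ind C i + ind C (i + 1)) (t : ℕ) :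
    (graphIdeal K (cycleGraph n)) ^ t ≤ ordIdeal K (ind C) (t * s) := by
  refine le_trans (Ideal.pow_right_mono (graphIdeal_le _ fun i => ?_) t) (ordIdeal_pow_le _ _ _)
  have e : (X i * X (i + 1) : MvPolynomial (ZMod n) K) =
      monomial (Finsupp.single i 1 + Finsupp.single (i + 1) 1) 1 := by
    simp [X, monomial_mul]
  rw [e, mem_ordIdeal_iff]
  intro d hd
  have := support_monomial_subset hd
  rw [Finset.mem_singleton] at this
  subst this
  rw [map_add, Finsupp.weight_single, Finsupp.weight_single]
  simpa using h i

lemma cov_ord [NeZero n] (C : Finset (ZMod n)) (hC : IsCov C) (t : ℕ) :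
    (graphIdeal K (cycleGraph n)) ^ t ≤ ordIdeal K (ind C) t := by
  have := edge_ord (K := K) C 1 (fun i => by
    rcases hC i with h | h <;> simp [ind, h]) t
  simpa using this

/-- A product of edges is in the power. -/
lemma matching_mem [NeZero n] (hn : 3 ≤ n) (w : ZMod n → ℕ) (d : ZMod n →₀ ℕ) (t : ℕ) (c : K)
    (hw : ∀ i, w i + w (i + 1) ≤ d (i + 1)) (ht : t ≤ ∑ i, w i) :
    (monomial d c : MvPolynomial (ZMod n) K) ∈ (graphIdeal K (cycleGraph n)) ^ t := by
  classical
  have h1 : ∏ i, (X i * X (i + 1) : MvPolynomial (ZMod n) K) ^ w i ∈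
      (graphIdeal K (cycleGraph n)) ^ t := by
    refine Ideal.pow_le_pow_right ht ?_
    rw [← Finset.prod_pow_eq_pow_sum]
    exact Ideal.prod_mem_prod fun i _ => Ideal.pow_mem_pow (edge_mem hn i) _
  have h2 : ∏ i, (X i * X (i + 1) : MvPolynomial (ZMod n) K) ^ w i =
      ∏ i, X (i + 1) ^ (w i + w (i + 1)) := by
    simp only [mul_pow, Finset.prod_mul_distrib, pow_add]
    rw [mul_comm]
    congr 1
    exact (Equiv.prod_comp (Equiv.addRight (1 : ZMod n))
      (fun i => (X i : MvPolynomial (ZMod n) K) ^ w i)).symm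
  have h3 : (monomial d c : MvPolynomial (ZMod n) K) = C c * ∏ i, X (i + 1) ^ d (i + 1) := by
    rw [monomial_eq, Finsupp.prod_fintype _ _ (by simp)]
    congr 1
    exact (Equiv.prod_comp (Equiv.addRight (1 : ZMod n))
      (fun i => (X i : MvPolynomial (ZMod n) K) ^ d i)).symm
  rw [h3]
  refine Ideal.mul_mem_left _ _ (Ideal.mem_of_dvd _ ?_ (h2 ▸ h1))
  exact Finset.prod_dvd_prod_of_dvd _ _ fun i _ => pow_dvd_pow _ (hw i)

lemma mem_pow_of_ord [NeZero n] (hn : 3 ≤ n) (t : ℕ) (f : MvPolynomial (ZMod n) K)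
    (h1 : ∀ C : Finset (ZMod n), IsCov C → f ∈ ordIdeal K (ind C) t)
    (h2 : f ∈ ordIdeal K (ind (Finset.univ : Finset (ZMod n))) (2 * t)) :
    f ∈ (graphIdeal K (cycleGraph n)) ^ t := by
  rw [f.as_sum]
  refine Ideal.sum_mem _ fun d hd => ?_
  have h3 := mem_ordIdeal_iff.1 h2 d hd
  rw [weight_ind] at h3
  obtain ⟨w, hw, hs⟩ := comb n hn d t (fun C hC => by
    have := mem_ordIdeal_iff.1 (h1 C hC) d hd
    rwa [weight_ind] at this) h3
  exact matching_mem hn w d t _ hw hs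

lemma maxid_isMaximal [NeZero n] : (Ideal.span
    (Set.range (X : ZMod n → MvPolynomial (ZMod n) K))).IsMaximal := by
  have : Ideal.span (Set.range (X : ZMod n → MvPolynomial (ZMod n) K)) =
      RingHom.ker (constantCoeff (σ := ZMod n) (R := K)) := by
    ext f
    rw [← Set.image_univ, mem_ideal_span_X_image, RingHom.mem_ker, constantCoeff_eq]
    constructor
    · intro h
      by_contra hne
      obtain ⟨i, _, hi⟩ := h 0 (mem_support_iff.2 hne)
      exact hi rfl
    · intro h d hd
      by_contra hcon
      push Not at hcon
      have : d = 0 := Finsupp.ext fun i => hcon i (Set.mem_univ _)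
      subst this
      exact mem_support_iff.1 hd h
  rw [this]
  exact RingHom.ker_isMaximal_of_surjective _ fun c => ⟨C c, by simp⟩

lemma ass_mem_iff [NeZero n] (J P : Ideal (MvPolynomial (ZMod n) K)) :
    P ∈ associatedPrimes (MvPolynomial (ZMod n) K) (MvPolynomial (ZMod n) K ⧸ J) ↔
      P.IsPrime ∧ ∃ f, ∀ g, g ∈ P ↔ g * f ∈ J := by
  rw [AssociatedPrimes.mem_iff, IsAssociatedPrime, Submodule.isAssociatedPrime_iff]
  refine and_congr_right fun _ => ?_
  constructor
  · rintro ⟨x, hx⟩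
    obtain ⟨f, rfl⟩ := Ideal.Quotient.mk_surjective x
    refine ⟨f, fun g => ?_⟩
    rw [hx, Submodule.mem_colon_singleton, Submodule.mem_bot, ← Ideal.Quotient.eq_zero_iff_mem]
    exact Iff.rfl
  · rintro ⟨f, hf⟩
    refine ⟨Ideal.Quotient.mk J f, ?_⟩
    ext g
    rw [hf, Submodule.mem_colon_singleton, Submodule.mem_bot, ← Ideal.Quotient.eq_zero_iff_mem]
    exact Iff.rfl

lemma min_subset_ass [NeZero n] (I : Ideal (MvPolynomial (ZMod n) K)) (t : ℕ) (ht : 1 ≤ t) :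
    I.minimalPrimes ⊆
      associatedPrimes (MvPolynomial (ZMod n) K) (MvPolynomial (ZMod n) K ⧸ I ^ t) := by
  have := Module.associatedPrimes.minimalPrimes_annihilator_subset_associatedPrimes
    (MvPolynomial (ZMod n) K) (MvPolynomial (ZMod n) K ⧸ I ^ t)
  rw [Ideal.annihilator_quotient, ← Ideal.radical_minimalPrimes, Ideal.radical_pow _ (by omega),
    Ideal.radical_minimalPrimes] at this
  exact this

lemma prime_cov (hn : 3 ≤ n) [NeZero n] (Q : Ideal (MvPolynomial (ZMod n) K)) (hQ : Q.IsPrime)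
    (hI : graphIdeal K (cycleGraph n) ≤ Q) (C : Finset (ZMod n))
    (hCm : ∀ C' : Finset (ZMod n), IsCov C' → C' ⊆ C → C ⊆ C')
    (hle : Q ≤ ordIdeal K (ind C) 1) : ordIdeal K (ind C) 1 ≤ Q := by
  classical
  have hsub : C ⊆ Finset.univ.filter fun i => (X i : MvPolynomial (ZMod n) K) ∈ Q := by
    apply hCm
    · intro i
      simpa using hQ.mem_or_mem (hI (edge_mem hn i))
    · intro i hi
      have h1 := hle (Finset.mem_filter.1 hi).2
      have h2 := mem_ordIdeal_iff.1 h1 (Finsupp.single i 1) (by simp [X, support_monomial])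
      rw [Finsupp.weight_single] at h2
      by_contra hne
      simp [ind, hne] at h2
  intro f hf
  have hf' := mem_ordIdeal_iff.1 hf
  have : f ∈ Ideal.span (X '' (C : Set (ZMod n)) : Set (MvPolynomial (ZMod n) K)) := by
    rw [mem_ideal_span_X_image]
    intro d hd
    have h1 := hf' d hd
    rw [weight_ind] at h1
    obtain ⟨i, hi, h⟩ := Finset.exists_ne_zero_of_sum_ne_zero (s := C) (f := fun i => d i)
      (by omega)
    exact ⟨i, hi, h⟩
  refine (Ideal.span_le.2 ?_) this
  rintro _ ⟨i, hi, rfl⟩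
  exact (Finset.mem_filter.1 (hsub hi)).2

lemma ass_subset (hn : 3 ≤ n) [NeZero n] (t : ℕ) (P : Ideal (MvPolynomial (ZMod n) K))
    (hP : P.IsPrime) (f : MvPolynomial (ZMod n) K)
    (hf : ∀ g, g ∈ P ↔ g * f ∈ (graphIdeal K (cycleGraph n)) ^ t) :
    P ∈ (graphIdeal K (cycleGraph n)).minimalPrimes ∨
      (P = Ideal.span (Set.range (X : ZMod n → MvPolynomial (ZMod n) K)) ∧
        ∀ C : Finset (ZMod n), IsCov C → f ∈ ordIdeal K (ind C) t) := by
  classical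
  by_cases h : ∀ C : Finset (ZMod n), IsCov C → f ∈ ordIdeal K (ind C) t
  · right
    refine ⟨?_, h⟩
    refine (maxid_isMaximal.eq_of_le hP.ne_top ?_).symm
    rw [Ideal.span_le]
    rintro _ ⟨i, rfl⟩
    refine hP.mem_of_pow_mem (2 * t) ?_
    rw [hf]
    refine mem_pow_of_ord hn t _ (fun C hC => Ideal.mul_mem_left _ _ (h C hC)) ?_
    refine Ideal.mul_mem_right _ _ ?_
    rw [mem_ordIdeal_iff, X_pow_eq_monomial]
    intro d hd
    have := support_monomial_subset hd
    rw [Finset.mem_singleton] at this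
    subst this
    rw [Finsupp.weight_single]
    simp [ind]
  · left
    push Not at h
    obtain ⟨C0, hC0, hfC0⟩ := h
    obtain ⟨C, hCC0, hC⟩ := (Set.toFinite {C : Finset (ZMod n) | IsCov C}).exists_le_minimal hC0
    have hfC : f ∉ ordIdeal K (ind C) t := by
      intro hcon
      apply hfC0
      rw [mem_ordIdeal_iff] at hcon ⊢
      intro d hd
      refine (hcon d hd).trans ?_
      rw [weight_ind, weight_ind]
      exact Finset.sum_le_sum_of_subset hCC0
    have hCm : ∀ C' : Finset (ZMod n), IsCov C' → C' ⊆ C → C ⊆ C' :=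
      fun C' h1 h2 => hC.2 h1 h2
    have hPle : P ≤ ordIdeal K (ind C) 1 := by
      intro g hg
      have h1 := mem_ordIdeal.1 (cov_ord C hC.1 t ((hf g).1 hg))
      rw [MvPolynomial.coe_mul, MvPowerSeries.weightedOrder_mul] at h1
      rw [mem_ordIdeal] at hfC ⊢
      by_contra hcon
      rw [Nat.cast_one, Order.one_le_iff_ne_zero, not_not] at hcon
      rw [hcon, zero_add] at h1
      exact hfC h1
    have hIP : graphIdeal K (cycleGraph n) ≤ P :=
      fun g hg => by
        refine hP.mem_of_pow_mem t ?_
        rw [hf]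
        exact Ideal.mul_mem_right _ _ (Ideal.pow_mem_pow hg t)
    refine ⟨⟨hP, hIP⟩, ?_⟩
    rintro Q ⟨hQ, hIQ⟩ hQP
    exact hPle.trans (prime_cov hn Q hQ hIQ C hCm (le_trans hQP hPle))

lemma witness (k t : ℕ) (hk : 1 ≤ k) (ht : k + 1 ≤ t) :
    ∃ d : ZMod (2 * k + 1) →₀ ℕ, (d.sum fun _ e => e) = 2 * t - 1 ∧
      ∀ g : MvPolynomial (ZMod (2 * k + 1)) K,
        g ∈ Ideal.span (Set.range (X : ZMod (2 * k + 1) → MvPolynomial (ZMod (2 * k + 1)) K)) ↔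
        g * monomial d 1 ∈ (graphIdeal K (cycleGraph (2 * k + 1))) ^ t := by
  classical
  have hn : 3 ≤ 2 * k + 1 := by omega
  let s := t - (k + 1)
  let d : ZMod (2 * k + 1) →₀ ℕ := Finsupp.equivFunOnFinite.symm fun i =>
    1 + s * ((if i = 0 then 1 else 0) + if i = 1 then 1 else 0)
  have hd : ∀ i, d i = 1 + s * ((if i = 0 then 1 else 0) + if i = 1 then 1 else 0) := fun i => rfl
  have hsum : ∑ i, d i = 2 * t - 1 := by
    simp only [hd, Finset.sum_add_distrib, ← Finset.mul_sum]
    simp [ZMod.card]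
    omega
  refine ⟨d, by rw [Finsupp.sum_fintype _ _ (by simp), hsum], ?_⟩
  let J : Ideal (MvPolynomial (ZMod (2 * k + 1)) K) :=
    Submodule.colon ((graphIdeal K (cycleGraph (2 * k + 1))) ^ t) {monomial d (1 : K)}
  have hJ : ∀ g, g ∈ J ↔ g * monomial d 1 ∈ (graphIdeal K (cycleGraph (2 * k + 1))) ^ t :=
    fun g => Submodule.mem_colon_singleton
  have hne : J ≠ ⊤ := by
    intro h
    have h1 : (1 : MvPolynomial (ZMod (2 * k + 1)) K) ∈ J := h ▸ Submodule.mem_top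
    rw [hJ, one_mul] at h1
    have h2 := edge_ord (K := K) (n := 2 * k + 1) Finset.univ 2 (fun i => by simp [ind]) t h1
    have h3 := mem_ordIdeal_iff.1 h2 d (by simp [support_monomial])
    rw [weight_ind, hsum] at h3
    omega
  have hle : Ideal.span (Set.range (X : ZMod (2 * k + 1) → MvPolynomial (ZMod (2 * k + 1)) K)) ≤ J := by
    rw [Ideal.span_le]
    rintro _ ⟨v, rfl⟩
    change _ ∈ J
    rw [hJ, X, monomial_mul]
    refine matching_mem hn (fun i => (if (i - v).val % 2 = 0 then 1 else 0) + s * if i = 0 then 1 else 0)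
      _ t _ ?_ ?_
    · intro i
      have e : i + 1 - v = (i - v) + 1 := by ring
      have e1 : (i + 1 = 1) ↔ i = 0 := by simp
      have e2 : (v = i + 1) ↔ (i - v) + 1 = 0 := by
        rw [← e, sub_eq_zero, eq_comm]
      simp only [Finsupp.add_apply, hd, Finsupp.single_apply, e1, e2, e, mul_add]
      have hp : (if (i - v).val % 2 = 0 then 1 else 0) + (if (i - v + 1).val % 2 = 0 then 1 else 0)
          ≤ (if i - v + 1 = 0 then 1 else 0) + 1 := by
        rcases val_succ_aux (2 * k + 1) (by omega) (i - v) with ⟨h, _⟩ | ⟨h, h'⟩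
        · rw [h]; split_ifs <;> omega
        · rw [if_pos h]; split_ifs <;> omega
      omega
    · rw [Finset.sum_add_distrib, ← Finset.mul_sum]
      have h1 : ∑ i : ZMod (2 * k + 1), (if (i - v).val % 2 = 0 then 1 else 0) = k + 1 := by
        have h2 := Equiv.sum_comp (Equiv.subRight v)
          (fun i : ZMod (2 * k + 1) => if i.val % 2 = 0 then 1 else 0)
        simp only [Equiv.subRight_apply] at h2
        rw [h2, sum_zmod_range (2 * k + 1) (fun m => if m % 2 = 0 then 1 else 0)]
        clear * -
        induction k with
        | zero => rfl
        | succ k ih =>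
          rw [show 2 * (k + 1) + 1 = 2 * k + 1 + 1 + 1 by ring, Finset.sum_range_succ,
            Finset.sum_range_succ, ih, if_neg (by omega), if_pos (by omega)]
      rw [h1]
      simp
      omega
  intro g
  rw [maxid_isMaximal.eq_of_le hne hle, hJ]

end

/-- Let `G` be an odd cycle of length `n = 2k + 1` with edge ideal `I`.
Then `Ass(R/Iᵗ) = Min(R/I)` for `1 ≤ t ≤ k`, while for `t ≥ k + 1` one has
`Ass(R/Iᵗ) = Min(R/I) ∪ {m}` and moreover `m = (Iᵗ : c)` for some monomial `c` of
degree `2t - 1`. -/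
theorem stmt_17 (K : Type) [Field K] (k n : ℕ) (hk : 1 ≤ k) (hn : n = 2 * k + 1)
    (I : Ideal (MvPolynomial (ZMod n) K)) (hI : I = graphIdeal K (cycleGraph n))
    (m : Ideal (MvPolynomial (ZMod n) K))
    (hm : m = Ideal.span (Set.range (X : ZMod n → MvPolynomial (ZMod n) K))) :
    (∀ t : ℕ, 1 ≤ t → t ≤ k →
      associatedPrimes (MvPolynomial (ZMod n) K) (MvPolynomial (ZMod n) K ⧸ I ^ t) =
        I.minimalPrimes) ∧
    (∀ t : ℕ, k + 1 ≤ t →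
      associatedPrimes (MvPolynomial (ZMod n) K) (MvPolynomial (ZMod n) K ⧸ I ^ t) =
        I.minimalPrimes ∪ {m} ∧
      ∃ d : ZMod n →₀ ℕ, (d.sum fun _ e => e) = 2 * t - 1 ∧
        m = Submodule.colon (I ^ t)
              (Ideal.span {(monomial d (1 : K) : MvPolynomial (ZMod n) K)})) := by
  subst hn
  subst hI
  subst hm
  have hn : 3 ≤ 2 * k + 1 := by omega
  refine ⟨fun t ht htk => ?_, fun t ht => ⟨?_, ?_⟩⟩
  · refine Set.Subset.antisymm ?_ (min_subset_ass _ t ht)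
    intro P hP
    obtain ⟨hPp, f, hf⟩ := (ass_mem_iff _ _).1 hP
    rcases ass_subset hn t P hPp f hf with h | ⟨_, h⟩
    · exact h
    · exfalso
      apply hPp.ne_top
      rw [Ideal.eq_top_iff_one, hf, one_mul]
      refine mem_pow_of_ord hn t f h ?_
      rw [mem_ordIdeal_iff]
      intro d hd
      rw [weight_ind]
      refine small_deg k hk d t htk fun C hC => ?_
      have := mem_ordIdeal_iff.1 (h C hC) d hd
      rwa [weight_ind] at this
  · refine Set.Subset.antisymm ?_ ?_
    · intro P hP
      obtain ⟨hPp, f, hf⟩ := (ass_mem_iff _ _).1 hP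
      rcases ass_subset hn t P hPp f hf with h | ⟨h, _⟩
      · exact Or.inl h
      · exact Or.inr h
    · refine Set.union_subset (min_subset_ass _ t (by omega)) ?_
      rintro _ rfl
      obtain ⟨d, _, hd⟩ := witness (K := K) k t hk ht
      exact (ass_mem_iff _ _).2 ⟨maxid_isMaximal.isPrime, _, hd⟩
  · obtain ⟨d, hs, hd⟩ := witness (K := K) k t hk ht
    refine ⟨d, hs, ?_⟩
    ext g
    rw [hd, Ideal.mem_colon_span_singleton]
end
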